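/- Let f : ℝ → ℝ be smooth, positive, with f(x) → 0 as |x| → ∞ and with bounded first and second derivatives, and fix t > 0. Let u : [0,T) × ℝ → ℝ (with T > t) be a classical solution of ∂u/∂s = ∂²u/∂x² − 2 f(x) u − u² with u(s,x) ≤ 0 and with u(s,·) and ∂u/∂x(s,·) bounded for each s. Let v : [0,t] × ℝ → ℝ be nonnegative, solve the backward equation ∂v/∂s = −∂²v/∂x² + 2 f(x) v pointwise, and assume for each s that v(s,·), ∂v/∂x(s,·), ∂²v/∂x²(s,·) and ∂v/∂s(s,·) are continuous, integrable, vanish at ±∞, that these bounds hold locally uniformly in s, and that ∫ℝ v(s,x) dx > 0. Then J(s) = ∫ℝ v(s,x) u(s,x) dx is differentiable on [0,t] and satisfies J'(s) ≤ −J(s)² / ‖v(s,·)‖_{L¹(ℝ)} for all s ∈ [0,t]. -/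

import Mathlib

open MeasureTheory Filter
open scoped ENNReal NNReal

/-!
The function `w = -u ≥ 0` solves `∂ₛw = ∂ₓ²w - 2 f w + w²`, and the equations of `v` and `w` are
dual to each other up to the quadratic term, so formally `J' = -∫ v w²` and Cauchy–Schwarz gives the
claim. Differentiating under the integral requires a bound on `w` and its Lipschitz constant
uniformly in time, whereas only every single slice is assumed to be bounded and Lipschitz.

* By Baire, in the closed set of times without locally uniform bounds some relatively open piece
  shares a bound. On a gap between two times of this piece the damped heat flow is a lower barrier,
  which bounds the heat evolution of `w σ` up to the right end of the gap by the slice there. Hence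
  that evolution decays like `κ / √τ` at short times `τ`, and `w` is at most twice it. Concentration
  of mass as `σ` tends to the left end is excluded by pointwise continuity in time through a
  Cousin-type interval induction. The gap then inherits bounds from its two ends, so there are no
  bad times.
* With uniform bounds, the maximum principle gives `|w (s + h) - S_h (w s)| ≤ C h` for the heat
  semigroup `S`, which dominates the difference quotients. The generator of `S`, pointwise and
  tested against `v`, then yields the right derivative of `∫ v w`. Continuity of `∫ v w²` makes the
  derivative two-sided.
-/

namespace HeatPairing

open Set Topology ProbabilityTheory

/-! ### The parabolic maximum principle -/

section MaximumPrinciple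

/-- `HasHeatOpAt D k s x` says that `(∂ₛ - ∂ₓ²) D = k` at the point `(s, x)`, the derivatives being
taken in the classical sense; the first space derivative is required on the whole line, so that the
second one makes sense. -/
def HasHeatOpAt (D : ℝ → ℝ → ℝ) (k s x : ℝ) : Prop :=
  ∃ (ds : ℝ) (d₁ : ℝ → ℝ) (d₂ : ℝ), HasDerivAt (fun r => D r x) ds s ∧
    (∀ y, HasDerivAt (D s) (d₁ y) y) ∧ HasDerivAt d₁ d₂ x ∧ ds - d₂ = k

variable {D E : ℝ → ℝ → ℝ} {k l s x : ℝ}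

lemma HasHeatOpAt.add (hD : HasHeatOpAt D k s x) (hE : HasHeatOpAt E l s x) :
    HasHeatOpAt (fun r y => D r y + E r y) (k + l) s x := by
  obtain ⟨ds, d₁, d₂, hds, hd₁, hd₂, rfl⟩ := hD
  obtain ⟨es, e₁, e₂, hes, he₁, he₂, rfl⟩ := hE
  exact ⟨_, _, _, hds.add hes, fun y => (hd₁ y).add (he₁ y), hd₂.add he₂, by ring⟩

lemma HasHeatOpAt.sub (hD : HasHeatOpAt D k s x) (hE : HasHeatOpAt E l s x) :
    HasHeatOpAt (fun r y => D r y - E r y) (k - l) s x := by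
  obtain ⟨ds, d₁, d₂, hds, hd₁, hd₂, rfl⟩ := hD
  obtain ⟨es, e₁, e₂, hes, he₁, he₂, rfl⟩ := hE
  exact ⟨_, _, _, hds.sub hes, fun y => (hd₁ y).sub (he₁ y), hd₂.sub he₂, by ring⟩

lemma HasHeatOpAt.time_mul {ρ : ℝ → ℝ} {ρ' : ℝ} (hρ : HasDerivAt ρ ρ' s)
    (hD : HasHeatOpAt D k s x) :
    HasHeatOpAt (fun r y => ρ r * D r y) (ρ' * D s x + ρ s * k) s x := by
  obtain ⟨ds, d₁, d₂, hds, hd₁, hd₂, rfl⟩ := hD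
  exact ⟨_, _, _, hρ.mul hds, fun y => (hd₁ y).const_mul _, hd₂.const_mul _, by ring⟩

lemma HasHeatOpAt.const_mul (hD : HasHeatOpAt D k s x) (c : ℝ) :
    HasHeatOpAt (fun r y => c * D r y) (c * k) s x := by
  simpa using hD.time_mul (hasDerivAt_const s c)

lemma hasHeatOpAt_time {ρ : ℝ → ℝ} {ρ' : ℝ} (hρ : HasDerivAt ρ ρ' s) (x : ℝ) :
    HasHeatOpAt (fun r _ => ρ r) ρ' s x :=
  ⟨ρ', 0, 0, hρ, fun _ => hasDerivAt_const _ _, hasDerivAt_const _ _, sub_zero _⟩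

lemma HasHeatOpAt.comp_add_const {z : ℝ} (hD : HasHeatOpAt D k s (x + z)) :
    HasHeatOpAt (fun r y => D r (y + z)) k s x := by
  obtain ⟨ds, d₁, d₂, hds, hd₁, hd₂, rfl⟩ := hD
  exact ⟨ds, fun y => d₁ (y + z), d₂, hds, fun y => (hd₁ _).comp_add_const y z,
    hd₂.comp_add_const x z, rfl⟩

lemma HasHeatOpAt.comp_sub_const_time {r₀ : ℝ} (hD : HasHeatOpAt D k (s - r₀) x) :
    HasHeatOpAt (fun r y => D (r - r₀) y) k s x := by
  obtain ⟨ds, d₁, d₂, hds, hd₁, hd₂, rfl⟩ := hD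
  exact ⟨ds, d₁, d₂, hds.comp_sub_const s r₀, hd₁, hd₂, rfl⟩

lemma hasHeatOpAt_quadratic (a s x : ℝ) :
    HasHeatOpAt (fun r y => 1 + y ^ 2 + 3 * (r - a)) 1 s x := by
  refine ⟨3, fun y => 2 * y, 2, ?_, fun y => ?_, ?_, by norm_num⟩
  · simpa using (((hasDerivAt_id s).sub_const a).const_mul 3).const_add (1 + x ^ 2)
  · simpa using ((hasDerivAt_pow 2 y).const_add 1).add_const (3 * (s - a))
  · simpa using (hasDerivAt_id x).const_mul 2

lemma deriv_deriv_nonpos_of_isLocalMax {φ φ' : ℝ → ℝ} {d x : ℝ}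
    (hφ : ∀ y, HasDerivAt φ (φ' y) y) (hφ' : HasDerivAt φ' d x) (hmax : IsLocalMax φ x) :
    d ≤ 0 := by
  have hderiv : deriv φ = φ' := funext fun y => (hφ y).deriv
  by_contra! hd
  have hmin : IsLocalMin φ x :=
    isLocalMin_of_deriv_deriv_pos (by rwa [hderiv, hφ'.deriv]) hmax.deriv_eq_zero
      (hφ x).continuousAt
  have hconst : φ =ᶠ[𝓝 x] fun _ => φ x := by
    filter_upwards [hmin, hmax] with y hge hle using le_antisymm hle hge
  have hφ'_zero : φ' =ᶠ[𝓝 x] fun _ => 0 := by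
    simpa [hderiv] using hconst.deriv
  have : deriv φ' x = 0 := by simpa using hφ'_zero.deriv_eq
  linarith [hφ'.deriv]

lemma deriv_nonneg_of_forall_Icc_le {φ : ℝ → ℝ} {d a s : ℝ} (has : a < s)
    (hφ : HasDerivAt φ d s) (hmax : ∀ r ∈ Icc a s, φ r ≤ φ s) : 0 ≤ d := by
  have hslope := (hasDerivWithinAt_iff_tendsto_slope' (by simp)).1
    (hφ.hasDerivWithinAt (s := Iio s))
  refine ge_of_tendsto hslope ?_
  filter_upwards [Ioo_mem_nhdsLT has] with r hr
  rw [slope_def_field]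
  exact div_nonneg_of_nonpos (sub_nonpos.2 (hmax r ⟨hr.1.le, hr.2.le⟩)) (sub_nonpos.2 hr.2.le)

lemma HasHeatOpAt.nonneg_of_isLocalMax {a : ℝ} (hD : HasHeatOpAt D k s x) (has : a < s)
    (hspace : IsLocalMax (D s) x) (htime : ∀ r ∈ Icc a s, D r x ≤ D s x) : 0 ≤ k := by
  obtain ⟨ds, d₁, d₂, hds, hd₁, hd₂, rfl⟩ := hD
  linarith [deriv_deriv_nonpos_of_isLocalMax hd₁ hd₂ hspace,
    deriv_nonneg_of_forall_Icc_le has hds htime]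

variable {a b B : ℝ}

lemma exists_pos_isLocalMax (hcont : ContinuousOn (Function.uncurry D) (Icc a b ×ˢ univ))
    {R s₀ x₀ : ℝ} (hR : ∀ s ∈ Icc a b, ∀ x, R ≤ |x| → D s x ≤ 0)
    (hs₀ : s₀ ∈ Icc a b) (hpos : 0 < D s₀ x₀) :
    ∃ s ∈ Icc a b, ∃ x, 0 < D s x ∧ IsLocalMax (D s) x ∧ ∀ r ∈ Icc a b, D r x ≤ D s x := by
  have hlt : ∀ s ∈ Icc a b, ∀ x, 0 < D s x → |x| < R := fun s hs x hD => by
    by_contra! h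
    linarith [hR s hs x h]
  obtain ⟨⟨s, x⟩, ⟨hs, hx⟩, hmax⟩ := (isCompact_Icc.prod isCompact_Icc).exists_isMaxOn
    ⟨(s₀, x₀), hs₀, abs_le.1 (hlt s₀ hs₀ x₀ hpos).le⟩
    (hcont.mono (prod_mono le_rfl (subset_univ (Icc (-R) R))))
  replace hmax : ∀ r ∈ Icc a b, ∀ y, |y| ≤ R → D r y ≤ D s x :=
    fun r hr y hy => hmax (show (r, y) ∈ _ from ⟨hr, abs_le.1 hy⟩)
  have hD : 0 < D s x := hpos.trans_le (hmax s₀ hs₀ x₀ (hlt s₀ hs₀ x₀ hpos).le)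
  refine ⟨s, hs, x, hD, ?_, fun r hr => hmax r hr x (abs_le.2 hx)⟩
  filter_upwards [continuous_abs.continuousAt.eventually_lt_const (hlt s hs x hD)] with y hy
  exact hmax s hs y hy.le

-- The barrier `ε (1 + x² + 3 (s - a))` confines the maximum to a compact set.
lemma nonpos_of_hasHeatOpAt_nonpos
    (hcont : ContinuousOn (Function.uncurry D) (Icc a b ×ˢ univ))
    (hbdd : ∀ s ∈ Icc a b, ∀ x, D s x ≤ B) (hinit : ∀ x, D a x ≤ 0)
    (heq : ∀ s ∈ Ioc a b, ∀ x, 0 < D s x → ∃ k ≤ 0, HasHeatOpAt D k s x) :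
    ∀ s ∈ Icc a b, ∀ x, D s x ≤ 0 := by
  intro s₀ hs₀ x₀
  by_contra! hpos
  set q : ℝ → ℝ → ℝ := fun r y => 1 + y ^ 2 + 3 * (r - a)
  have hq : ∀ s ∈ Icc a b, ∀ x, 1 + x ^ 2 ≤ q s x := fun s hs x => by
    linarith [hs.1]
  have hq₀ : 0 < q s₀ x₀ := by nlinarith [hq s₀ hs₀ x₀]
  obtain ⟨ε, hε, hεlt⟩ : ∃ ε > 0, ε * q s₀ x₀ < D s₀ x₀ :=
    ⟨D s₀ x₀ / (2 * q s₀ x₀), by positivity, by field_simp; linarith⟩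
  have hqcont : Continuous (Function.uncurry q) := by
    simp only [q, Function.uncurry_def]; fun_prop
  have hoff : ∀ s ∈ Icc a b, ∀ x, 1 + |B| / ε ≤ |x| → D s x - ε * q s x ≤ 0 := by
    intro s hs x hx
    have hBx : |B| ≤ ε * |x| := by
      rw [mul_comm, ← div_le_iff₀ hε]; linarith
    have hxq : |x| ≤ q s x := by
      nlinarith [hq s hs x, sq_abs x, sq_nonneg (|x| - 1)]
    linarith [hbdd s hs x, le_abs_self B, mul_le_mul_of_nonneg_left hxq hε.le]
  obtain ⟨s, hs, x, hDq, hspace, htime⟩ := exists_pos_isLocalMax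
    (D := fun s x => D s x - ε * q s x)
    (hcont.sub (hqcont.const_smul ε).continuousOn) hoff hs₀ (sub_pos.2 hεlt)
  have hD : 0 < D s x := by
    nlinarith [hq s hs x, mul_nonneg hε.le ((by positivity : 0 ≤ 1 + x ^ 2).trans (hq s hs x))]
  have has : a < s := hs.1.lt_of_ne fun h => by linarith [h ▸ hinit x]
  obtain ⟨k, hk, hop⟩ := heq s ⟨has, hs.2⟩ x hD
  have := (hop.sub ((hasHeatOpAt_quadratic a s x).const_mul ε)).nonneg_of_isLocalMax has hspace
    fun r hr => htime r ⟨hr.1, hr.2.trans hs.2⟩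
  linarith

lemma hasDerivAt_exp_mul_sub (c a s : ℝ) :
    HasDerivAt (fun r => Real.exp (c * (r - a))) (c * Real.exp (c * (s - a))) s := by
  simpa [mul_comm] using (((hasDerivAt_id s).sub_const a).const_mul c).exp

theorem parabolic_max_principle {C : ℝ} (hC : 0 ≤ C)
    (hcont : ContinuousOn (Function.uncurry D) (Icc a b ×ˢ univ))
    (hbdd : ∀ s ∈ Icc a b, ∀ x, D s x ≤ B) (hinit : ∀ x, D a x ≤ 0)
    (heq : ∀ s ∈ Ioc a b, ∀ x, 0 < D s x → ∃ k ≤ C * D s x, HasHeatOpAt D k s x) :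
    ∀ s ∈ Icc a b, ∀ x, D s x ≤ 0 := by
  set ρ : ℝ → ℝ := fun r => Real.exp (-C * (r - a))
  have hρ : ∀ r, 0 < ρ r := fun r => Real.exp_pos _
  have hρcont : Continuous fun p : ℝ × ℝ => ρ p.1 := by simp only [ρ]; fun_prop
  suffices h : ∀ s ∈ Icc a b, ∀ x, ρ s * D s x ≤ 0 from
    fun s hs x => nonpos_of_mul_nonpos_right (h s hs x) (hρ s)
  refine nonpos_of_hasHeatOpAt_nonpos (B := |B|) (hρcont.continuousOn.mul hcont)
    (fun s hs x => ?_) (fun x => mul_nonpos_of_nonneg_of_nonpos (hρ a).le (hinit x))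
    (fun s hs x hpos => ?_)
  · have hρ1 : ρ s ≤ 1 := Real.exp_le_one_iff.2 (by nlinarith [hs.1])
    calc ρ s * D s x ≤ ρ s * |B| :=
          mul_le_mul_of_nonneg_left ((hbdd s hs x).trans (le_abs_self B)) (hρ s).le
      _ ≤ |B| := mul_le_of_le_one_left (abs_nonneg B) hρ1
  · obtain ⟨k, hk, hop⟩ := heq s hs x (pos_of_mul_pos_right hpos (hρ s).le)
    refine ⟨_, ?_, hop.time_mul (hasDerivAt_exp_mul_sub (-C) a s)⟩
    nlinarith [hρ s, mul_le_mul_of_nonneg_left hk (hρ s).le]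

end MaximumPrinciple

/-! ### The heat semigroup -/

section HeatSemigroup

/-- The one-dimensional heat kernel, the density of `gaussianReal 0 (2 * τ)`. -/
noncomputable def heatKernel (τ z : ℝ) : ℝ :=
  (√(4 * Real.pi * τ))⁻¹ * Real.exp (-z ^ 2 / (4 * τ))

/-- The heat semigroup `S_τ g = exp(τ ∂²) g`. It is written as an average over a standard Gaussian
rather than as a convolution with `heatKernel τ`, so that `τ = 0` is covered too. -/
noncomputable def heatSemigroup (τ : ℝ) (g : ℝ → ℝ) (x : ℝ) : ℝ :=
  ∫ y, g (x + √(2 * τ) * y) ∂gaussianReal 0 1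

variable {τ β B : ℝ} {g : ℝ → ℝ}

lemma heatKernel_nonneg (τ z : ℝ) : 0 ≤ heatKernel τ z := by
  unfold heatKernel; positivity

lemma heatKernel_pos (hτ : 0 < τ) (z : ℝ) : 0 < heatKernel τ z := by
  unfold heatKernel; positivity

@[fun_prop]
lemma continuous_heatKernel (τ : ℝ) : Continuous (heatKernel τ) := by
  unfold heatKernel; fun_prop

lemma heatKernel_sub_eq_gaussianPDFReal (hτ : 0 ≤ τ) (x y : ℝ) :
    heatKernel τ (y - x) = gaussianPDFReal x (Real.toNNReal (2 * τ)) y := by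
  rw [gaussianPDFReal_def, heatKernel, Real.coe_toNNReal _ (by positivity)]
  ring_nf

lemma integrable_heatKernel_sub (hτ : 0 ≤ τ) (x : ℝ) :
    Integrable (fun y => heatKernel τ (y - x)) := by
  simp_rw [heatKernel_sub_eq_gaussianPDFReal hτ]
  exact integrable_gaussianPDFReal _ _

lemma integrable_heatKernel_sub_mul (hτ : 0 ≤ τ) (hg : Continuous g) (hB : ∀ y, |g y| ≤ B)
    (x : ℝ) : Integrable (fun y => heatKernel τ (y - x) * g y) :=
  (integrable_heatKernel_sub hτ x).mul_bdd hg.aestronglyMeasurable (Eventually.of_forall hB)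

lemma gaussianReal_map_affine (hτ : 0 ≤ τ) (x : ℝ) :
    (gaussianReal 0 1).map (fun y => x + √(2 * τ) * y) =
      gaussianReal x (Real.toNNReal (2 * τ)) := by
  have hmap := gaussianReal_map_const_add
    (μ := √(2 * τ) * 0) (v := NNReal.mk (√(2 * τ) ^ 2) (sq_nonneg _) * 1) x
  rw [← gaussianReal_map_const_mul, Measure.map_map (by fun_prop) (by fun_prop)] at hmap
  have hvar : (NNReal.mk (√(2 * τ) ^ 2) (sq_nonneg _) * 1 : ℝ≥0) = Real.toNNReal (2 * τ) := by
    ext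
    rw [mul_one, NNReal.coe_mk, Real.sq_sqrt (by positivity), Real.coe_toNNReal _ (by positivity)]
  rwa [hvar, mul_zero, zero_add] at hmap

lemma heatSemigroup_eq_integral_heatKernel (hτ : 0 < τ) (hg : Continuous g) (x : ℝ) :
    heatSemigroup τ g x = ∫ y, heatKernel τ (y - x) * g y := by
  unfold heatSemigroup
  rw [← integral_map (φ := fun y => x + √(2 * τ) * y) (by fun_prop) hg.aestronglyMeasurable,
    gaussianReal_map_affine hτ.le, integral_gaussianReal_eq_integral_smul (by simpa using hτ)]
  simp_rw [heatKernel_sub_eq_gaussianPDFReal hτ.le, smul_eq_mul]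

lemma heatSemigroup_zero (g : ℝ → ℝ) (x : ℝ) : heatSemigroup 0 g x = g x := by
  simp [heatSemigroup]

lemma integrable_comp_affine_gaussianReal (hg : Continuous g) (hB : ∀ y, |g y| ≤ B) (c x : ℝ) :
    Integrable (fun y => g (x + c * y)) (gaussianReal 0 1) :=
  Integrable.of_bound (by fun_prop) B (Eventually.of_forall fun _ => hB _)

lemma abs_heatSemigroup_le (hB : ∀ y, |g y| ≤ B) (τ x : ℝ) : |heatSemigroup τ g x| ≤ B := by
  simpa [heatSemigroup] using norm_integral_le_of_norm_le_const (μ := gaussianReal 0 1)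
    (f := fun y => g (x + √(2 * τ) * y)) (Eventually.of_forall fun _ => hB _)

lemma heatSemigroup_nonneg (hg : ∀ y, 0 ≤ g y) (τ x : ℝ) : 0 ≤ heatSemigroup τ g x :=
  integral_nonneg fun _ => hg _

lemma continuous_heatSemigroup (hg : Continuous g) (hB : ∀ y, |g y| ≤ B) :
    Continuous (fun p : ℝ × ℝ => heatSemigroup p.1 g p.2) :=
  continuous_of_dominated (bound := fun _ => B)
    (fun _ => (by fun_prop : Continuous _).aestronglyMeasurable)
    (fun _ => Eventually.of_forall fun _ => hB _) (integrable_const _)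
    (Eventually.of_forall fun _ => by fun_prop)

lemma heatKernel_eq_sqrt_mul_exp_mul (hτ : 0 < τ) (hβ : 0 < β) (z : ℝ) :
    heatKernel τ z =
      √(β / τ) * Real.exp (-((1 / (4 * τ) - 1 / (4 * β)) * z ^ 2)) * heatKernel β z := by
  have hnorm : (√(4 * Real.pi * τ))⁻¹ = √(β / τ) * (√(4 * Real.pi * β))⁻¹ := by
    rw [← Real.sqrt_inv, ← Real.sqrt_inv, ← Real.sqrt_mul (by positivity)]
    congr 1
    field_simp
  have hexp : Real.exp (-z ^ 2 / (4 * τ)) =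
      Real.exp (-((1 / (4 * τ) - 1 / (4 * β)) * z ^ 2)) * Real.exp (-z ^ 2 / (4 * β)) := by
    rw [← Real.exp_add]
    ring_nf
  rw [heatKernel, heatKernel, hnorm, hexp]
  ring

lemma heatKernel_le_sqrt_mul (hτ : 0 < τ) (hτβ : τ ≤ β) (z : ℝ) :
    heatKernel τ z ≤ √(β / τ) * heatKernel β z := by
  rw [heatKernel_eq_sqrt_mul_exp_mul hτ (hτ.trans_le hτβ)]
  refine mul_le_mul_of_nonneg_right (mul_le_of_le_one_right (Real.sqrt_nonneg _) ?_)
    (heatKernel_nonneg _ _)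
  rw [Real.exp_le_one_iff, neg_nonpos]
  exact mul_nonneg (sub_nonneg.2 (by gcongr)) (sq_nonneg z)

lemma heatSemigroup_le_sqrt_mul (hτ : 0 < τ) (hτβ : τ ≤ β) (hg : Continuous g)
    (hB : ∀ y, |g y| ≤ B) (hg₀ : ∀ y, 0 ≤ g y) (x : ℝ) :
    heatSemigroup τ g x ≤ √(β / τ) * heatSemigroup β g x := by
  have hβ : 0 < β := hτ.trans_le hτβ
  rw [heatSemigroup_eq_integral_heatKernel hτ hg, heatSemigroup_eq_integral_heatKernel hβ hg,
    ← integral_const_mul]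
  refine integral_mono (integrable_heatKernel_sub_mul hτ.le hg hB x)
    ((integrable_heatKernel_sub_mul hβ.le hg hB x).const_mul _) fun y => ?_
  simp only [← mul_assoc]
  exact mul_le_mul_of_nonneg_right (heatKernel_le_sqrt_mul hτ hτβ _) (hg₀ y)

end HeatSemigroup

section HeatEquation

variable {τ A B c : ℝ} {g k k' : ℝ → ℝ}

/-- The first space derivative of `heatKernel`. -/
noncomputable def heatKernelDeriv (τ z : ℝ) : ℝ := -(z / (2 * τ)) * heatKernel τ z

/-- The second space derivative of `heatKernel`, which is also its time derivative. -/
noncomputable def heatKernelDerivTwo (τ z : ℝ) : ℝ :=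
  (z ^ 2 / (4 * τ ^ 2) - 1 / (2 * τ)) * heatKernel τ z

@[fun_prop]
lemma continuous_heatKernelDeriv (τ : ℝ) : Continuous (heatKernelDeriv τ) := by
  unfold heatKernelDeriv; fun_prop

@[fun_prop]
lemma continuous_heatKernelDerivTwo (τ : ℝ) : Continuous (heatKernelDerivTwo τ) := by
  unfold heatKernelDerivTwo; fun_prop

lemma hasDerivAt_heatKernel (τ z : ℝ) :
    HasDerivAt (heatKernel τ) (heatKernelDeriv τ z) z := by
  have hexp : HasDerivAt (fun z : ℝ => -z ^ 2 / (4 * τ)) (-(2 * z) / (4 * τ)) z := by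
    simpa using (hasDerivAt_pow 2 z).neg.div_const (4 * τ)
  refine (hexp.exp.const_mul (√(4 * Real.pi * τ))⁻¹).congr_deriv ?_
  rw [heatKernelDeriv, heatKernel, show -(2 * z) / (4 * τ) = -(z / (2 * τ)) by ring]
  ring

lemma hasDerivAt_heatKernelDeriv (τ z : ℝ) :
    HasDerivAt (heatKernelDeriv τ) (heatKernelDerivTwo τ z) z := by
  refine ((((hasDerivAt_id z).div_const (2 * τ)).neg).mul
    (hasDerivAt_heatKernel τ z)).congr_deriv ?_
  simp only [heatKernelDeriv, heatKernelDerivTwo, Pi.neg_apply, id_eq]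
  ring

lemma hasDerivAt_inv_sqrt_mul (hc : 0 < c) (hτ : 0 < τ) :
    HasDerivAt (fun τ : ℝ => (√(c * τ))⁻¹) (-(1 / (2 * τ)) * (√(c * τ))⁻¹) τ := by
  have hlin : HasDerivAt (fun τ : ℝ => c * τ) c τ := by
    simpa using (hasDerivAt_id τ).const_mul c
  refine ((hlin.sqrt (by positivity)).inv (by positivity)).congr_deriv ?_
  rw [Real.sq_sqrt (by positivity)]
  field_simp

lemma hasDerivAt_heatKernel_time (hτ : 0 < τ) (z : ℝ) :
    HasDerivAt (fun τ => heatKernel τ z) (heatKernelDerivTwo τ z) τ := by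
  have hexp : HasDerivAt (fun τ : ℝ => -z ^ 2 / (4 * τ)) (z ^ 2 / (4 * τ ^ 2)) τ := by
    refine ((hasDerivAt_const τ (-z ^ 2)).div ((hasDerivAt_id τ).const_mul 4)
      (mul_ne_zero four_ne_zero hτ.ne')).congr_deriv ?_
    simp only [id_eq]
    field_simp
    ring
  refine ((hasDerivAt_inv_sqrt_mul (by positivity) hτ).mul hexp.exp).congr_deriv ?_
  rw [heatKernelDerivTwo, heatKernel]
  ring

lemma sq_mul_exp_le (hc : 0 < c) (z : ℝ) : z ^ 2 * Real.exp (-z ^ 2 / c) ≤ c := by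
  rw [neg_div, Real.exp_neg, mul_inv_le_iff₀ (Real.exp_pos _)]
  calc z ^ 2 = c * (z ^ 2 / c) := by field_simp
    _ ≤ c * Real.exp (z ^ 2 / c) := by gcongr; linarith [Real.add_one_le_exp (z ^ 2 / c)]

lemma abs_mul_exp_le (hc : 0 < c) (z : ℝ) : |z| * Real.exp (-z ^ 2 / c) ≤ (1 + c) / 2 := by
  have hexp : Real.exp (-z ^ 2 / c) ≤ 1 :=
    Real.exp_le_one_iff.2 (div_nonpos_of_nonpos_of_nonneg (by nlinarith) hc.le)
  have hz : |z| ≤ (1 + z ^ 2) / 2 := by nlinarith [sq_abs z, sq_nonneg (|z| - 1)]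
  calc |z| * Real.exp (-z ^ 2 / c) ≤ (1 + z ^ 2) / 2 * Real.exp (-z ^ 2 / c) := by gcongr
    _ ≤ (1 + c) / 2 := by linarith [sq_mul_exp_le hc z]

lemma heatKernel_eq_mul_exp_mul_exp (τ z : ℝ) :
    heatKernel τ z = (√(4 * Real.pi * τ))⁻¹ *
      (Real.exp (-z ^ 2 / (8 * τ)) * Real.exp (-z ^ 2 / (8 * τ))) := by
  rw [heatKernel, ← Real.exp_add]
  congr 2
  ring

lemma abs_heatKernelDeriv_le (hτ : 0 < τ) (z : ℝ) :
    |heatKernelDeriv τ z| ≤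
      (1 + 8 * τ) / (4 * τ) * (√(4 * Real.pi * τ))⁻¹ * Real.exp (-z ^ 2 / (8 * τ)) := by
  rw [heatKernelDeriv, abs_mul, abs_neg, abs_div, abs_of_pos (show 0 < 2 * τ by positivity),
    abs_of_nonneg (heatKernel_nonneg τ z), heatKernel_eq_mul_exp_mul_exp]
  set A := (√(4 * Real.pi * τ))⁻¹
  set e := Real.exp (-z ^ 2 / (8 * τ))
  calc |z| / (2 * τ) * (A * (e * e)) = |z| * e * (A * e / (2 * τ)) := by ring
    _ ≤ (1 + 8 * τ) / 2 * (A * e / (2 * τ)) := by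
        gcongr; exact abs_mul_exp_le (by positivity) z
    _ = _ := by field_simp; ring

lemma abs_heatKernelDerivTwo_le (hτ : 0 < τ) (z : ℝ) :
    |heatKernelDerivTwo τ z| ≤
      5 / (2 * τ) * (√(4 * Real.pi * τ))⁻¹ * Real.exp (-z ^ 2 / (8 * τ)) := by
  have hcoeff : |z ^ 2 / (4 * τ ^ 2) - 1 / (2 * τ)| ≤ z ^ 2 / (4 * τ ^ 2) + 1 / (2 * τ) := by
    refine (abs_sub _ _).trans_eq ?_
    rw [abs_of_nonneg (by positivity), abs_of_nonneg (by positivity)]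
  rw [heatKernelDerivTwo, abs_mul, abs_of_nonneg (heatKernel_nonneg τ z),
    heatKernel_eq_mul_exp_mul_exp]
  set A := (√(4 * Real.pi * τ))⁻¹
  set e := Real.exp (-z ^ 2 / (8 * τ))
  have he1 : e ≤ 1 :=
    Real.exp_le_one_iff.2 (div_nonpos_of_nonpos_of_nonneg (by nlinarith) (by positivity))
  have hsq : z ^ 2 * e ≤ 8 * τ := sq_mul_exp_le (by positivity) z
  calc |z ^ 2 / (4 * τ ^ 2) - 1 / (2 * τ)| * (A * (e * e))
      ≤ (z ^ 2 / (4 * τ ^ 2) + 1 / (2 * τ)) * (A * (e * e)) := by gcongr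
    _ = (z ^ 2 * e / (4 * τ ^ 2) + 1 * e / (2 * τ)) * (A * e) := by ring
    _ ≤ (8 * τ / (4 * τ ^ 2) + 1 * 1 / (2 * τ)) * (A * e) := by gcongr
    _ = _ := by field_simp; ring

lemma integrable_exp_neg_sub_sq_div (hc : 0 < c) (x : ℝ) :
    Integrable (fun y : ℝ => Real.exp (-(y - x) ^ 2 / c)) := by
  refine ((integrable_exp_neg_mul_sq (one_div_pos.2 hc)).comp_sub_right x).congr
    (Eventually.of_forall fun y => ?_)
  simp only
  ring_nf

lemma exp_neg_sub_sq_div_le {x x' : ℝ} (hc : 0 < c) (hx : |x' - x| ≤ 1) (y : ℝ) :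
    Real.exp (-(y - x') ^ 2 / c) ≤ Real.exp (1 / c) * Real.exp (-(y - x) ^ 2 / (2 * c)) := by
  rw [← Real.exp_add, Real.exp_le_exp]
  have hxx : (x' - x) ^ 2 ≤ 1 := (sq_le_one_iff_abs_le_one _).2 hx
  have hsq : (y - x) ^ 2 ≤ 2 * (y - x') ^ 2 + 2 := by nlinarith [sq_nonneg ((y - x') - (x' - x))]
  field_simp
  linarith

lemma hasDerivAt_integral_comp_sub_mul (hc : 0 < c) (hk : ∀ z, HasDerivAt k (k' z) z)
    (hk' : Continuous k') (hkA : ∀ z, |k' z| ≤ A * Real.exp (-z ^ 2 / c))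
    (hg : Continuous g) (hB : ∀ y, |g y| ≤ B) {x : ℝ}
    (hint : Integrable fun y => k (y - x) * g y) :
    HasDerivAt (fun x => ∫ y, k (y - x) * g y) (∫ y, -k' (y - x) * g y) x := by
  have hkc : Continuous k := continuous_iff_continuousAt.2 fun z => (hk z).continuousAt
  have hA : 0 ≤ A := by simpa using (abs_nonneg _).trans (hkA 0)
  refine (hasDerivAt_integral_of_dominated_loc_of_deriv_le
    (F := fun x y => k (y - x) * g y) (F' := fun x y => -k' (y - x) * g y)
    (bound := fun y => A * (Real.exp (1 / c) * Real.exp (-(y - x) ^ 2 / (2 * c))) * B)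
    (Metric.ball_mem_nhds x one_pos)
    (Eventually.of_forall fun x => (by fun_prop : Continuous _).aestronglyMeasurable) hint
    (by fun_prop : Continuous _).aestronglyMeasurable
    (Eventually.of_forall fun y x' hx' => ?_)
    (((integrable_exp_neg_sub_sq_div (by positivity) x).const_mul _).const_mul _ |>.mul_const _)
    (Eventually.of_forall fun y x' _ => ?_)).2
  · rw [Metric.mem_ball, Real.dist_eq] at hx'
    rw [norm_mul, norm_neg, Real.norm_eq_abs, Real.norm_eq_abs]
    gcongr
    · refine (hkA _).trans ?_
      gcongr
      exact exp_neg_sub_sq_div_le hc hx'.le y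
    · exact hB y
  · have hsub : HasDerivAt (fun x => y - x) (-1) x' := by
      simpa using (hasDerivAt_id x').const_sub y
    simpa using ((hk (y - x')).comp x' hsub).mul_const (g y)

lemma hasDerivAt_heatSemigroup_time (hτ : 0 < τ) (hg : Continuous g) (hB : ∀ y, |g y| ≤ B)
    (x : ℝ) : HasDerivAt (fun r => heatSemigroup r g x)
      (∫ y, heatKernelDerivTwo τ (y - x) * g y) τ := by
  have hev : (fun r => heatSemigroup r g x) =ᶠ[𝓝 τ] fun r => ∫ y, heatKernel r (y - x) * g y := by
    filter_upwards [lt_mem_nhds hτ] with r hr using heatSemigroup_eq_integral_heatKernel hr hg x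
  refine HasDerivAt.congr_of_eventuallyEq ?_ hev
  refine (hasDerivAt_integral_of_dominated_loc_of_deriv_le
    (F := fun r y => heatKernel r (y - x) * g y)
    (F' := fun r y => heatKernelDerivTwo r (y - x) * g y)
    (bound := fun y => 5 / (2 * (τ / 2)) * (√(4 * Real.pi * (τ / 2)))⁻¹ *
      Real.exp (-(y - x) ^ 2 / (8 * (2 * τ))) * B)
    (Ioo_mem_nhds (show τ / 2 < τ by linarith) (show τ < 2 * τ by linarith))
    (Eventually.of_forall fun r => (by fun_prop : Continuous _).aestronglyMeasurable)
    (integrable_heatKernel_sub_mul hτ.le hg hB x)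
    (by fun_prop : Continuous _).aestronglyMeasurable
    (Eventually.of_forall fun y r hr => ?_)
    (((integrable_exp_neg_sub_sq_div (by positivity) x).const_mul _).mul_const _)
    (Eventually.of_forall fun y r hr =>
      (hasDerivAt_heatKernel_time (by linarith [hr.1]) _).mul_const _)).2
  have hr₀ : 0 < r := by linarith [hr.1]
  have hr₁ := hr.1.le
  have hr₂ := hr.2.le
  rw [norm_mul, Real.norm_eq_abs, Real.norm_eq_abs]
  gcongr
  · refine (abs_heatKernelDerivTwo_le hr₀ _).trans ?_
    rw [neg_div, neg_div]
    gcongr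
  · exact hB y

lemma hasDerivAt_heatSemigroup_space (hτ : 0 < τ) (hg : Continuous g) (hB : ∀ y, |g y| ≤ B)
    (x : ℝ) : HasDerivAt (heatSemigroup τ g) (∫ y, -heatKernelDeriv τ (y - x) * g y) x := by
  rw [funext fun x => heatSemigroup_eq_integral_heatKernel hτ hg x]
  exact hasDerivAt_integral_comp_sub_mul (by positivity) (hasDerivAt_heatKernel τ)
    (continuous_heatKernelDeriv τ) (abs_heatKernelDeriv_le hτ) hg hB
    (integrable_heatKernel_sub_mul hτ.le hg hB x)

lemma integrable_heatKernelDeriv_sub_mul (hτ : 0 < τ) (hg : Continuous g)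
    (hB : ∀ y, |g y| ≤ B) (x : ℝ) : Integrable fun y => heatKernelDeriv τ (y - x) * g y :=
  (((integrable_exp_neg_sub_sq_div (c := 8 * τ) (by positivity) x).const_mul _).mono'
    (by fun_prop : Continuous _).aestronglyMeasurable
    (Eventually.of_forall fun y => abs_heatKernelDeriv_le hτ (y - x))).mul_bdd
    hg.aestronglyMeasurable (Eventually.of_forall hB)

lemma hasDerivAt_integral_neg_heatKernelDeriv (hτ : 0 < τ) (hg : Continuous g)
    (hB : ∀ y, |g y| ≤ B) (x : ℝ) :
    HasDerivAt (fun x => ∫ y, -heatKernelDeriv τ (y - x) * g y)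
      (∫ y, heatKernelDerivTwo τ (y - x) * g y) x := by
  simp only [neg_mul, integral_neg]
  have hderiv := hasDerivAt_integral_comp_sub_mul (c := 8 * τ) (by positivity)
    (hasDerivAt_heatKernelDeriv τ) (continuous_heatKernelDerivTwo τ)
    (abs_heatKernelDerivTwo_le hτ) hg hB (integrable_heatKernelDeriv_sub_mul hτ hg hB x)
  exact hderiv.fun_neg.congr_deriv (by simp only [neg_mul, integral_neg, neg_neg])

theorem hasHeatOpAt_heatSemigroup (hτ : 0 < τ) (hg : Continuous g) (hB : ∀ y, |g y| ≤ B)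
    (x : ℝ) : HasHeatOpAt (fun r => heatSemigroup r g) 0 τ x :=
  ⟨_, _, _, hasDerivAt_heatSemigroup_time hτ hg hB x, hasDerivAt_heatSemigroup_space hτ hg hB,
    hasDerivAt_integral_neg_heatKernelDeriv hτ hg hB x, sub_self _⟩

end HeatEquation

section Generator

variable {g : ℝ → ℝ} {B : ℝ}

/-- The remainder `g (x + z) - g x - z g'(x)` of the first-order Taylor expansion at `x`. -/
noncomputable def taylorRemainder (g : ℝ → ℝ) (x z : ℝ) : ℝ := g (x + z) - g x - z * deriv g x

lemma isLittleO_taylorRemainder_sub (hg : ContDiff ℝ 2 g) (x : ℝ) :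
    (fun z => taylorRemainder g x z - z ^ 2 / 2 * deriv (deriv g) x) =o[𝓝 0] fun z => z ^ 2 := by
  have htaylor := taylor_isLittleO_univ (x₀ := x) (n := 2) (f := g) (by exact_mod_cast hg)
  have htendsto : Tendsto (fun z : ℝ => x + z) (𝓝 0) (𝓝 x) := by
    simpa using (by fun_prop : Continuous fun z : ℝ => x + z).tendsto 0
  refine (htaylor.comp_tendsto htendsto).congr (fun z => ?_) fun z => by simp
  simp [taylorRemainder, taylorWithinEval_succ, iteratedDerivWithin_univ, iteratedDeriv_succ]
  ring

lemma exists_abs_taylorRemainder_le (hg : ContDiff ℝ 2 g) (hB : ∀ y, |g y| ≤ B) (x : ℝ) :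
    ∃ K, ∀ z, |taylorRemainder g x z| ≤ K * z ^ 2 := by
  obtain ⟨δ, hδ, hball⟩ := Metric.eventually_nhds_iff.1
    ((isLittleO_taylorRemainder_sub hg x).def one_pos)
  have hB₀ : 0 ≤ B := (abs_nonneg _).trans (hB 0)
  set a := |deriv g x|
  set c := |deriv (deriv g) x|
  refine ⟨max (1 + c / 2) (2 * B / δ ^ 2 + a / δ), fun z => ?_⟩
  rcases lt_or_ge |z| δ with hz | hz
  · have hnear := hball (y := z) (by simpa using hz)
    rw [Real.norm_eq_abs, Real.norm_eq_abs, abs_of_nonneg (sq_nonneg z), one_mul] at hnear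
    calc |taylorRemainder g x z|
        ≤ |taylorRemainder g x z - z ^ 2 / 2 * deriv (deriv g) x|
          + |z ^ 2 / 2 * deriv (deriv g) x| := by
          linarith [abs_sub_abs_le_abs_sub (taylorRemainder g x z) (z ^ 2 / 2 * deriv (deriv g) x)]
      _ ≤ z ^ 2 + z ^ 2 / 2 * c := by
          rw [abs_mul, abs_of_nonneg (show 0 ≤ z ^ 2 / 2 by positivity)]; gcongr
      _ = (1 + c / 2) * z ^ 2 := by ring
      _ ≤ _ := by gcongr; exact le_max_left _ _
  · have hzδ : 1 ≤ |z| / δ := (one_le_div hδ).2 hz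
    calc |taylorRemainder g x z| ≤ |g (x + z)| + |g x| + |z * deriv g x| :=
          (abs_sub _ _).trans (by gcongr; exact abs_sub _ _)
      _ ≤ 2 * B * 1 ^ 2 + |z| * a * 1 := by rw [abs_mul]; linarith [hB (x + z), hB x]
      _ ≤ 2 * B * (|z| / δ) ^ 2 + |z| * a * (|z| / δ) := by gcongr
      _ = (2 * B / δ ^ 2 + a / δ) * z ^ 2 := by rw [div_pow, ← sq_abs z]; field_simp
      _ ≤ _ := by gcongr; exact le_max_right _ _

lemma integrable_id_gaussianReal : Integrable (fun y : ℝ => y) (gaussianReal 0 1) :=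
  (memLp_id_gaussianReal' 1 (by simp)).integrable le_rfl

lemma integrable_sq_gaussianReal : Integrable (fun y : ℝ => y ^ 2) (gaussianReal 0 1) :=
  (memLp_id_gaussianReal' 2 (by simp)).integrable_sq

lemma integral_sq_gaussianReal : ∫ y, y ^ 2 ∂gaussianReal 0 1 = 1 := by
  have hvar := variance_fun_id_gaussianReal (μ := 0) (v := 1)
  rw [variance_eq_integral (by fun_prop)] at hvar
  simpa [integral_id_gaussianReal] using hvar

lemma integral_taylorRemainder (hg : Continuous g) (hB : ∀ y, |g y| ≤ B) (h x : ℝ) :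
    ∫ y, taylorRemainder g x (√(2 * h) * y) ∂gaussianReal 0 1 = heatSemigroup h g x - g x := by
  have hint := integrable_comp_affine_gaussianReal hg hB √(2 * h) x
  simp only [taylorRemainder]
  rw [integral_sub (hint.sub' (integrable_const _))
    ((integrable_id_gaussianReal.const_mul _).mul_const _), integral_sub hint (integrable_const _),
    integral_mul_const, integral_const_mul, integral_id_gaussianReal]
  simp [heatSemigroup]

lemma tendsto_taylorRemainder_div (hg : ContDiff ℝ 2 g) (x y : ℝ) :
    Tendsto (fun h => taylorRemainder g x (√(2 * h) * y) / h) (𝓝[>] 0)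
      (𝓝 (y ^ 2 * deriv (deriv g) x)) := by
  have hzero : Tendsto (fun h : ℝ => √(2 * h) * y) (𝓝[>] 0) (𝓝 0) := by
    have hcont : Continuous fun h : ℝ => √(2 * h) * y := by fun_prop
    simpa using (hcont.tendsto 0).mono_left nhdsWithin_le_nhds
  have hsq : ∀ h : ℝ, 0 < h → (√(2 * h) * y) ^ 2 = 2 * y ^ 2 * h := fun h hh => by
    rw [mul_pow, Real.sq_sqrt (by positivity)]; ring
  have hbigO : (fun h : ℝ => (√(2 * h) * y) ^ 2) =O[𝓝[>] 0] fun h => h :=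
    (Asymptotics.isBigO_const_mul_self (2 * y ^ 2) (fun h : ℝ => h) _).congr'
      (eventually_mem_nhdsWithin.mono fun h hh => (hsq h hh).symm) EventuallyEq.rfl
  have hlim := (((isLittleO_taylorRemainder_sub hg x).comp_tendsto hzero).trans_isBigO
    hbigO).tendsto_div_nhds_zero.add_const (y ^ 2 * deriv (deriv g) x)
  rw [zero_add] at hlim
  refine hlim.congr' (eventually_mem_nhdsWithin.mono fun h (hh : 0 < h) => ?_)
  simp only [Function.comp, hsq h hh]
  field_simp
  ring

theorem tendsto_heatSemigroup_sub_div (hg : ContDiff ℝ 2 g) (hB : ∀ y, |g y| ≤ B) (x : ℝ) :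
    Tendsto (fun h => (heatSemigroup h g x - g x) / h) (𝓝[>] 0) (𝓝 (deriv (deriv g) x)) := by
  obtain ⟨K, hK⟩ := exists_abs_taylorRemainder_le hg hB x
  have hgc := hg.continuous
  have hlim : Tendsto (fun h => ∫ y, taylorRemainder g x (√(2 * h) * y) / h ∂gaussianReal 0 1)
      (𝓝[>] 0) (𝓝 (∫ y, y ^ 2 * deriv (deriv g) x ∂gaussianReal 0 1)) := by
    refine tendsto_integral_filter_of_dominated_convergence (fun y => 2 * K * y ^ 2) ?_ ?_
      (integrable_sq_gaussianReal.const_mul _)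
      (Eventually.of_forall (tendsto_taylorRemainder_div hg x))
    · unfold taylorRemainder
      exact Eventually.of_forall fun h => (by fun_prop : Continuous _).aestronglyMeasurable
    · filter_upwards [self_mem_nhdsWithin] with h (hh : 0 < h)
      refine Eventually.of_forall fun y => ?_
      rw [norm_div, Real.norm_eq_abs, Real.norm_eq_abs, abs_of_pos hh, div_le_iff₀ hh]
      refine (hK _).trans_eq ?_
      rw [mul_pow, Real.sq_sqrt (by positivity)]
      ring
  rw [integral_mul_const, integral_sq_gaussianReal, one_mul] at hlim
  exact hlim.congr fun h => by rw [integral_div, integral_taylorRemainder hgc hB]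

end Generator

/-! ### Comparison for bounded Lipschitz solutions -/

/-- `φ` is bounded by `B` and `B`-Lipschitz. -/
structure BoundedLip (B : ℝ) (φ : ℝ → ℝ) : Prop where
  abs_le : ∀ x, |φ x| ≤ B
  abs_sub_le : ∀ x y, |φ x - φ y| ≤ B * |x - y|

lemma BoundedLip.nonneg {B : ℝ} {φ : ℝ → ℝ} (h : BoundedLip B φ) : 0 ≤ B :=
  (abs_nonneg _).trans (h.abs_le 0)

lemma BoundedLip.mono {B B' : ℝ} {φ : ℝ → ℝ} (h : BoundedLip B φ) (hB : B ≤ B') :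
    BoundedLip B' φ :=
  ⟨fun x => (h.abs_le x).trans hB, fun x y => (h.abs_sub_le x y).trans (by gcongr)⟩

/-- `w` is a nonnegative solution on `[0, T)` of `∂ₛw = ∂ₓ²w - 2 f w + w²`, that is, `-w` solves the
equation of the theorem. Every time slice is bounded and Lipschitz, but no uniformity in time is
required. -/
structure IsNonnegSolution (f : ℝ → ℝ) (T : ℝ) (w : ℝ → ℝ → ℝ) : Prop where
  hasDerivAt_time : ∀ s ∈ Ico (0 : ℝ) T, ∀ x, HasDerivAt (fun r => w r x)
    (deriv (deriv (w s)) x - 2 * f x * w s x + w s x ^ 2) s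
  contDiff : ∀ s ∈ Ico (0 : ℝ) T, ContDiff ℝ 2 (w s)
  nonneg : ∀ s ∈ Ico (0 : ℝ) T, ∀ x, 0 ≤ w s x
  boundedLip : ∀ s ∈ Ico (0 : ℝ) T, ∃ B, BoundedLip B (w s)

section Comparison

variable {f : ℝ → ℝ} {T : ℝ} {w : ℝ → ℝ → ℝ} {F L σ s B K κ : ℝ}

lemma IsNonnegSolution.continuousAt_time (hw : IsNonnegSolution f T w) (hs : s ∈ Ico 0 T)
    (x : ℝ) : ContinuousAt (fun r => w r x) s :=
  (hw.hasDerivAt_time s hs x).continuousAt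

lemma IsNonnegSolution.continuous (hw : IsNonnegSolution f T w) (hs : s ∈ Ico 0 T) :
    Continuous (w s) := (hw.contDiff s hs).continuous

lemma IsNonnegSolution.hasHeatOpAt (hw : IsNonnegSolution f T w) (hs : s ∈ Ico 0 T) (x : ℝ) :
    HasHeatOpAt w (w s x ^ 2 - 2 * f x * w s x) s x :=
  ⟨_, _, _, hw.hasDerivAt_time s hs x,
    fun y => ((hw.contDiff s hs).differentiable two_ne_zero y).hasDerivAt,
    ((hw.contDiff s hs).differentiable_deriv_two x).hasDerivAt, by ring⟩

lemma IsNonnegSolution.continuousOn_uncurry (hw : IsNonnegSolution f T w)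
    (hI : Icc σ s ⊆ Ico 0 T) (hB : ∀ r ∈ Icc σ s, BoundedLip B (w r)) :
    ContinuousOn (Function.uncurry w) (Icc σ s ×ˢ univ) := by
  rintro ⟨r, x⟩ ⟨hr, -⟩
  have hspace : Tendsto (fun p : ℝ × ℝ => B * |p.2 - x|) (𝓝 (r, x)) (𝓝 0) := by
    simpa using (by fun_prop : Continuous fun p : ℝ × ℝ => B * |p.2 - x|).tendsto (r, x)
  have htime : Tendsto (fun p : ℝ × ℝ => |w p.1 x - w r x|) (𝓝 (r, x)) (𝓝 0) := by
    simpa using (((hw.continuousAt_time (hI hr) x).tendsto.comp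
      (continuous_fst.tendsto (r, x))).sub_const (w r x)).abs
  rw [ContinuousWithinAt, tendsto_iff_dist_tendsto_zero]
  refine squeeze_zero' (Eventually.of_forall fun _ => dist_nonneg) ?_
    ((by simpa using hspace.add htime : Tendsto _ _ _).mono_left nhdsWithin_le_nhds)
  filter_upwards [self_mem_nhdsWithin] with p hp
  simp only [Function.uncurry, Real.dist_eq]
  linarith [abs_sub_le (w p.1 p.2) (w p.1 x) (w r x), (hB p.1 hp.1).abs_sub_le p.2 x]

lemma hasHeatOpAt_heatSemigroup_sub {r : ℝ} {g : ℝ → ℝ} (hσr : σ < r) (hg : Continuous g)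
    (hB : ∀ y, |g y| ≤ B) (x : ℝ) : HasHeatOpAt (fun r => heatSemigroup (r - σ) g) 0 r x :=
  (hasHeatOpAt_heatSemigroup (sub_pos.2 hσr) hg hB x).comp_sub_const_time

lemma continuous_heatSemigroup_sub {g : ℝ → ℝ} (hg : Continuous g) (hB : ∀ y, |g y| ≤ B) (σ : ℝ) :
    Continuous (fun p : ℝ × ℝ => heatSemigroup (p.1 - σ) g p.2) :=
  (continuous_heatSemigroup hg hB).comp (by fun_prop : Continuous fun p : ℝ × ℝ => (p.1 - σ, p.2))

lemma IsNonnegSolution.exp_mul_heatSemigroup_le (hw : IsNonnegSolution f T w)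
    (hf₀ : ∀ x, 0 ≤ f x) (hF : ∀ x, f x ≤ F) (hI : Icc σ s ⊆ Ico 0 T) (hσs : σ ≤ s)
    (hB : ∀ r ∈ Icc σ s, BoundedLip B (w r)) (x : ℝ) :
    Real.exp (-2 * F * (s - σ)) * heatSemigroup (s - σ) (w σ) x ≤ w s x := by
  have hσI : σ ∈ Icc σ s := left_mem_Icc.2 hσs
  have hF₀ : 0 ≤ F := (hf₀ 0).trans (hF 0)
  have hg := hw.continuous (hI hσI)
  have hgB := (hB σ hσI).abs_le
  have hS₀ := heatSemigroup_nonneg (hw.nonneg σ (hI hσI))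
  refine sub_nonpos.1 <| parabolic_max_principle (C := 0) (B := B) le_rfl
    (D := fun r y => Real.exp (-2 * F * (r - σ)) * heatSemigroup (r - σ) (w σ) y - w r y)
    (ContinuousOn.sub (Continuous.continuousOn ?_) (hw.continuousOn_uncurry hI hB))
    (fun r hr y => ?_) (fun y => by simp [heatSemigroup_zero]) (fun r hr y hpos => ?_)
    s (right_mem_Icc.2 hσs) x
  · exact (by fun_prop : Continuous fun p : ℝ × ℝ => Real.exp (-2 * F * (p.1 - σ))).mul
      (continuous_heatSemigroup_sub hg hgB σ)
  · have hexp : Real.exp (-2 * F * (r - σ)) ≤ 1 :=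
      Real.exp_le_one_iff.2 (by nlinarith [mul_nonneg hF₀ (sub_nonneg.2 hr.1)])
    linarith [mul_le_of_le_one_left (hS₀ (r - σ) y) hexp, hw.nonneg r (hI hr) y,
      le_of_abs_le (abs_heatSemigroup_le hgB (r - σ) y)]
  · have hrI : r ∈ Ico 0 T := hI ⟨hr.1.le, hr.2⟩
    refine ⟨_, ?_, ((hasHeatOpAt_heatSemigroup_sub hr.1 hg hgB y).time_mul
      (hasDerivAt_exp_mul_sub (-2 * F) σ r)).sub (hw.hasHeatOpAt hrI y)⟩
    set E := Real.exp (-2 * F * (r - σ)) * heatSemigroup (r - σ) (w σ) y with hE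
    have hE₀ : 0 ≤ E := mul_nonneg (Real.exp_pos _).le (hS₀ _ _)
    calc _ = -2 * F * E + 2 * f y * w r y - w r y ^ 2 := by rw [hE]; ring
      _ ≤ 0 * (E - w r y) := by
        nlinarith [mul_le_mul_of_nonneg_right (hF y) hE₀, mul_nonneg (hf₀ y) hpos.le,
          sq_nonneg (w r y)]

lemma hasDerivAt_inv_one_sub_mul_sqrt {r : ℝ} (hσr : σ < r) (hne : 1 - 2 * κ * √(r - σ) ≠ 0) :
    HasDerivAt (fun r => (1 - 2 * κ * √(r - σ))⁻¹)
      (κ / √(r - σ) * (1 - 2 * κ * √(r - σ))⁻¹ ^ 2) r := by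
  have hden : HasDerivAt (fun r => 1 - 2 * κ * √(r - σ)) (-(2 * κ * (1 / (2 * √(r - σ))))) r :=
    ((((hasDerivAt_id r).sub_const σ).sqrt (sub_pos.2 hσr).ne').const_mul (2 * κ)).const_sub 1
  refine (hden.inv hne).congr_deriv ?_
  have : 0 < √(r - σ) := Real.sqrt_pos.2 (sub_pos.2 hσr)
  field_simp

lemma reaction_sub_supersolution_le {f W Z ρ a : ℝ} (hf : 0 ≤ f) (hW : 0 ≤ W) (hWB : W ≤ B)
    (hZ : 0 ≤ Z) (hZB : Z ≤ B) (hZa : Z ≤ a) (hρ : ρ ≤ 2) (hρW : ρ * Z ≤ W) :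
    W ^ 2 - 2 * f * W - a * ρ ^ 2 * Z ≤ 3 * B * (W - ρ * Z) := by
  have habsorb : ρ ^ 2 * Z * Z ≤ ρ ^ 2 * Z * a := mul_le_mul_of_nonneg_left hZa (by positivity)
  have hsum : W + ρ * Z ≤ 3 * B := by linarith [mul_le_mul hρ hZB hZ zero_le_two]
  calc W ^ 2 - 2 * f * W - a * ρ ^ 2 * Z ≤ W ^ 2 - ρ ^ 2 * Z * Z := by
        linarith [mul_nonneg hf hW]
    _ = (W + ρ * Z) * (W - ρ * Z) := by ring
    _ ≤ 3 * B * (W - ρ * Z) := mul_le_mul_of_nonneg_right hsum (sub_nonneg.2 hρW)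

-- The supersolution is `ρ(r) S_{r-σ} w(σ)` with `ρ = (1 - 2κ √(r-σ))⁻¹`, which solves
-- `ρ' = κ (r-σ)^{-1/2} ρ²` and therefore absorbs the quadratic term.
lemma IsNonnegSolution.le_two_mul_heatSemigroup (hw : IsNonnegSolution f T w)
    (hf₀ : ∀ x, 0 ≤ f x) (hI : Icc σ s ⊆ Ico 0 T) (hσs : σ ≤ s)
    (hB : ∀ r ∈ Icc σ s, BoundedLip B (w r)) (hκ : 0 ≤ κ)
    (hdecay : ∀ τ, 0 < τ → τ ≤ s - σ → ∀ y, heatSemigroup τ (w σ) y ≤ κ / √τ)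
    (hshort : 4 * κ * √(s - σ) ≤ 1) (x : ℝ) :
    w s x ≤ 2 * heatSemigroup (s - σ) (w σ) x := by
  have hσI : σ ∈ Icc σ s := left_mem_Icc.2 hσs
  have hg := hw.continuous (hI hσI)
  have hgB := (hB σ hσI).abs_le
  have hB₀ := (hB σ hσI).nonneg
  have hS₀ := heatSemigroup_nonneg (hw.nonneg σ (hI hσI))
  set ρ : ℝ → ℝ := fun r => (1 - 2 * κ * √(r - σ))⁻¹ with hρ
  have hden : ∀ r ∈ Icc σ s, 1 / 2 ≤ 1 - 2 * κ * √(r - σ) := fun r hr => by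
    nlinarith [mul_le_mul_of_nonneg_left (Real.sqrt_le_sqrt (sub_le_sub_right hr.2 σ)) hκ]
  have hρ₂ : ∀ r ∈ Icc σ s, ρ r ≤ 2 := fun r hr => by
    simpa using inv_anti₀ one_half_pos (hden r hr)
  have hρ₀ : ∀ r ∈ Icc σ s, 0 ≤ ρ r := fun r hr => inv_nonneg.2 (by linarith [hden r hr])
  suffices h : w s x - ρ s * heatSemigroup (s - σ) (w σ) x ≤ 0 by
    linarith [mul_le_mul_of_nonneg_right (hρ₂ s (right_mem_Icc.2 hσs)) (hS₀ (s - σ) x)]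
  refine parabolic_max_principle (C := 3 * B) (B := B) (by positivity)
    (D := fun r y => w r y - ρ r * heatSemigroup (r - σ) (w σ) y)
    ((hw.continuousOn_uncurry hI hB).sub (ContinuousOn.mul (ContinuousOn.inv₀ (by fun_prop) ?_)
      (continuous_heatSemigroup_sub hg hgB σ).continuousOn))
    (fun r hr y => ?_) (fun y => by simp [heatSemigroup_zero, hρ]) (fun r hr y hpos => ?_)
    s (right_mem_Icc.2 hσs) x
  · exact fun p hp => (one_half_pos.trans_le (hden p.1 hp.1)).ne'
  · linarith [mul_nonneg (hρ₀ r hr) (hS₀ (r - σ) y), le_of_abs_le ((hB r hr).abs_le y)]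
  · have hrI : r ∈ Icc σ s := ⟨hr.1.le, hr.2⟩
    refine ⟨_, ?_, (hw.hasHeatOpAt (hI hrI) y).sub
      ((hasHeatOpAt_heatSemigroup_sub hr.1 hg hgB y).time_mul
        (hasDerivAt_inv_one_sub_mul_sqrt hr.1 (one_half_pos.trans_le (hden r hrI)).ne'))⟩
    set Z := heatSemigroup (r - σ) (w σ) y
    have hZ₀ : 0 ≤ Z := hS₀ _ _
    have hZB : Z ≤ B := le_of_abs_le (abs_heatSemigroup_le hgB (r - σ) y)
    have hZκ : Z ≤ κ / √(r - σ) := hdecay (r - σ) (sub_pos.2 hr.1) (by linarith [hr.2]) y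
    refine le_trans (le_of_eq ?_) (reaction_sub_supersolution_le (f := f y) (ρ := ρ r) (Z := Z)
      (a := κ / √(r - σ)) (hf₀ y) (hw.nonneg r (hI hrI) y) (le_of_abs_le ((hB r hrI).abs_le y))
      hZ₀ hZB hZκ (hρ₂ r hrI) (sub_nonneg.1 hpos.le))
    simp only [hρ]
    ring

lemma IsNonnegSolution.sub_heatSemigroup_le (hw : IsNonnegSolution f T w)
    (hf₀ : ∀ x, 0 ≤ f x) (hI : Icc σ s ⊆ Ico 0 T) (hσs : σ ≤ s)
    (hB : ∀ r ∈ Icc σ s, BoundedLip B (w r)) (x : ℝ) :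
    w s x - heatSemigroup (s - σ) (w σ) x ≤ B ^ 2 * (s - σ) := by
  have hσI : σ ∈ Icc σ s := left_mem_Icc.2 hσs
  have hg := hw.continuous (hI hσI)
  have hgB := (hB σ hσI).abs_le
  refine sub_nonpos.1 <| parabolic_max_principle (C := 0) (B := B) le_rfl
    (D := fun r y => w r y - heatSemigroup (r - σ) (w σ) y - B ^ 2 * (r - σ))
    (((hw.continuousOn_uncurry hI hB).sub (continuous_heatSemigroup_sub hg hgB σ).continuousOn).sub
      (by fun_prop)) (fun r hr y => ?_) (fun y => by simp [heatSemigroup_zero])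
    (fun r hr y _ => ?_) s (right_mem_Icc.2 hσs) x
  · linarith [le_of_abs_le ((hB r hr).abs_le y),
      heatSemigroup_nonneg (hw.nonneg σ (hI hσI)) (r - σ) y,
      mul_nonneg (sq_nonneg B) (sub_nonneg.2 hr.1)]
  · have hrI : r ∈ Icc σ s := ⟨hr.1.le, hr.2⟩
    refine ⟨_, ?_, ((hw.hasHeatOpAt (hI hrI) y).sub
      (hasHeatOpAt_heatSemigroup_sub hr.1 hg hgB y)).sub
      (hasHeatOpAt_time (((hasDerivAt_id r).sub_const σ).const_mul (B ^ 2)) y)⟩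
    nlinarith [mul_nonneg (hf₀ y) (hw.nonneg r (hI hrI) y), hw.nonneg r (hI hrI) y,
      le_of_abs_le ((hB r hrI).abs_le y)]

lemma IsNonnegSolution.heatSemigroup_sub_le (hw : IsNonnegSolution f T w)
    (hf₀ : ∀ x, 0 ≤ f x) (hF : ∀ x, f x ≤ F) (hI : Icc σ s ⊆ Ico 0 T) (hσs : σ ≤ s)
    (hB : ∀ r ∈ Icc σ s, BoundedLip B (w r)) (x : ℝ) :
    heatSemigroup (s - σ) (w σ) x - w s x ≤ 2 * F * B * (s - σ) := by
  have hσI : σ ∈ Icc σ s := left_mem_Icc.2 hσs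
  have hg := hw.continuous (hI hσI)
  have hgB := (hB σ hσI).abs_le
  have hFB : 0 ≤ F * B := mul_nonneg ((hf₀ 0).trans (hF 0)) (hB σ hσI).nonneg
  refine sub_nonpos.1 <| parabolic_max_principle (C := 0) (B := B) le_rfl
    (D := fun r y => heatSemigroup (r - σ) (w σ) y - w r y - 2 * F * B * (r - σ))
    (((continuous_heatSemigroup_sub hg hgB σ).continuousOn.sub (hw.continuousOn_uncurry hI hB)).sub
      (by fun_prop)) (fun r hr y => ?_) (fun y => by simp [heatSemigroup_zero])
    (fun r hr y _ => ?_) s (right_mem_Icc.2 hσs) x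
  · linarith [le_of_abs_le (abs_heatSemigroup_le hgB (r - σ) y), hw.nonneg r (hI hr) y,
      mul_nonneg hFB (sub_nonneg.2 hr.1)]
  · have hrI : r ∈ Icc σ s := ⟨hr.1.le, hr.2⟩
    refine ⟨_, ?_, ((hasHeatOpAt_heatSemigroup_sub hr.1 hg hgB y).sub
      (hw.hasHeatOpAt (hI hrI) y)).sub
      (hasHeatOpAt_time (((hasDerivAt_id r).sub_const σ).const_mul (2 * F * B)) y)⟩
    have hfw : f y * w r y ≤ F * B := mul_le_mul (hF y) (le_of_abs_le ((hB r hrI).abs_le y))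
      (hw.nonneg r (hI hrI) y) ((hf₀ 0).trans (hF 0))
    nlinarith [sq_nonneg (w r y)]

theorem IsNonnegSolution.abs_sub_heatSemigroup_le (hw : IsNonnegSolution f T w)
    (hf₀ : ∀ x, 0 ≤ f x) (hF : ∀ x, f x ≤ F) (hI : Icc σ s ⊆ Ico 0 T) (hσs : σ ≤ s)
    (hB : ∀ r ∈ Icc σ s, BoundedLip B (w r)) (x : ℝ) :
    |w s x - heatSemigroup (s - σ) (w σ) x| ≤ (2 * F * B + B ^ 2) * (s - σ) := by
  have hFB : 0 ≤ F * B :=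
    mul_nonneg ((hf₀ 0).trans (hF 0)) (hB σ (left_mem_Icc.2 hσs)).nonneg
  have hτ : 0 ≤ s - σ := sub_nonneg.2 hσs
  rw [abs_le]
  constructor <;> nlinarith [hw.sub_heatSemigroup_le hf₀ hI hσs hB x,
    hw.heatSemigroup_sub_le hf₀ hF hI hσs hB x, mul_nonneg hFB hτ, mul_nonneg (sq_nonneg B) hτ]

lemma reaction_increment_le {a b p q δ : ℝ} (ha : 0 ≤ a) (hab : |b - a| ≤ δ) (hp : 0 ≤ p)
    (hpK : p ≤ K) (hqK : q ≤ K) (hqp : q ≤ p) :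
    p ^ 2 - 2 * b * p - (q ^ 2 - 2 * a * q) ≤ 2 * K * (p - q) + 2 * δ * K := by
  have hquad : (p + q) * (p - q) ≤ 2 * K * (p - q) :=
    mul_le_mul_of_nonneg_right (by linarith) (sub_nonneg.2 hqp)
  have hpot : -(b - a) * p ≤ δ * K :=
    mul_le_mul ((neg_le_abs _).trans hab) hpK hp ((abs_nonneg _).trans hab)
  linarith [mul_nonneg ha (sub_nonneg.2 hqp)]

/-- The solution of `∂ᵣY = ∂ₓ²Y + k Y + c exp (k (r - σ))` which starts from `g` at time `σ`. It
serves as a supersolution for space increments. -/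
noncomputable def growingHeatFlow (k c σ : ℝ) (g : ℝ → ℝ) (r y : ℝ) : ℝ :=
  Real.exp (k * (r - σ)) * (heatSemigroup (r - σ) g y + c * (r - σ))

section GrowingHeatFlow

variable {k c r : ℝ} {g : ℝ → ℝ}

lemma growingHeatFlow_self (k c σ : ℝ) (g : ℝ → ℝ) (y : ℝ) :
    growingHeatFlow k c σ g σ y = g y := by
  simp [growingHeatFlow, heatSemigroup_zero]

lemma growingHeatFlow_nonneg (hc : 0 ≤ c) (hg : ∀ y, 0 ≤ g y) (hσr : σ ≤ r) (y : ℝ) :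
    0 ≤ growingHeatFlow k c σ g r y :=
  mul_nonneg (Real.exp_pos _).le
    (add_nonneg (heatSemigroup_nonneg hg _ y) (mul_nonneg hc (sub_nonneg.2 hσr)))

lemma continuous_growingHeatFlow (hg : Continuous g) (hB : ∀ y, |g y| ≤ B) (k c σ : ℝ) :
    Continuous (Function.uncurry (growingHeatFlow k c σ g)) := by
  have := continuous_heatSemigroup_sub hg hB σ
  simp only [growingHeatFlow, Function.uncurry_def]
  fun_prop

lemma hasHeatOpAt_growingHeatFlow (hσr : σ < r) (hg : Continuous g) (hB : ∀ y, |g y| ≤ B)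
    (k c y : ℝ) : HasHeatOpAt (growingHeatFlow k c σ g)
      (k * growingHeatFlow k c σ g r y + c * Real.exp (k * (r - σ))) r y := by
  have hop := ((hasHeatOpAt_heatSemigroup_sub hσr hg hB y).add
    (hasHeatOpAt_time (((hasDerivAt_id r).sub_const σ).const_mul c) y)).time_mul
      (hasDerivAt_exp_mul_sub k σ r)
  convert hop using 1
  · rfl
  · rw [growingHeatFlow, id_eq]
    ring

end GrowingHeatFlow

lemma IsNonnegSolution.increment_le (hw : IsNonnegSolution f T w)
    (hf₀ : ∀ x, 0 ≤ f x) (hL : ∀ x y, |f x - f y| ≤ L * |x - y|) (hI : Icc σ s ⊆ Ico 0 T)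
    (hσs : σ ≤ s) (hB : ∀ r ∈ Icc σ s, BoundedLip B (w r))
    (hK : ∀ r ∈ Icc σ s, ∀ y, w r y ≤ K) (h x : ℝ) :
    w s (x + h) - w s x ≤
      growingHeatFlow (2 * K) (2 * L * K * |h|) σ (fun y => |w σ (y + h) - w σ y|) s x := by
  have hσI : σ ∈ Icc σ s := left_mem_Icc.2 hσs
  have hcw := hw.continuous (hI hσI)
  have hB_incr : ∀ r ∈ Icc σ s, ∀ y, |w r (y + h) - w r y| ≤ B * |h| := fun r hr y => by
    simpa using (hB r hr).abs_sub_le (y + h) y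
  set g : ℝ → ℝ := fun y => |w σ (y + h) - w σ y|
  have hg : Continuous g := by fun_prop
  have hgB : ∀ y, |g y| ≤ B * |h| := fun y => (abs_abs _).trans_le (hB_incr σ hσI y)
  have hK₀ : 0 ≤ K := (hw.nonneg σ (hI hσI) 0).trans (hK σ hσI 0)
  have hL₀ : 0 ≤ L := by simpa using (abs_nonneg _).trans (hL 1 0)
  have hY₀ : ∀ r ∈ Icc σ s, ∀ y, 0 ≤ growingHeatFlow (2 * K) (2 * L * K * |h|) σ g r y :=
    fun r hr => growingHeatFlow_nonneg (by positivity) (fun _ => abs_nonneg _) hr.1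
  have hcu := hw.continuousOn_uncurry hI hB
  refine sub_nonpos.1 <| parabolic_max_principle (C := 2 * K) (B := B * |h|) (by positivity)
    (D := fun r y => w r (y + h) - w r y - growingHeatFlow (2 * K) (2 * L * K * |h|) σ g r y)
    (((hcu.comp (f := fun p : ℝ × ℝ => (p.1, p.2 + h)) (by fun_prop)
      fun p hp => ⟨hp.1, trivial⟩).sub hcu).sub
        (continuous_growingHeatFlow hg hgB _ _ σ).continuousOn)
    (fun r hr y => by linarith [hY₀ r hr y, le_of_abs_le (hB_incr r hr y)])
    (fun y => by simpa [growingHeatFlow_self, g] using le_abs_self (w σ (y + h) - w σ y))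
    (fun r hr y hpos => ?_) s (right_mem_Icc.2 hσs) x
  have hrI : r ∈ Icc σ s := ⟨hr.1.le, hr.2⟩
  refine ⟨_, ?_, ((hw.hasHeatOpAt (hI hrI) (y + h)).comp_add_const.sub
    (hw.hasHeatOpAt (hI hrI) y)).sub (hasHeatOpAt_growingHeatFlow hr.1 hg hgB _ _ y)⟩
  have hexp : 1 ≤ Real.exp (2 * K * (r - σ)) :=
    Real.one_le_exp (mul_nonneg (by positivity) (sub_nonneg.2 hrI.1))
  linarith [hY₀ r hrI y, reaction_increment_le (hf₀ y) (by simpa using hL (y + h) y)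
    (hw.nonneg r (hI hrI) (y + h)) (hK r hrI (y + h)) (hK r hrI y)
    (by linarith [hY₀ r hrI y] : w r y ≤ w r (y + h)),
    le_mul_of_one_le_right (by positivity : 0 ≤ 2 * L * K * |h|) hexp]

end Comparison

/-! ### Bounds between two good times -/

-- Cousin's lemma; the tag `z` lies in the short interval, so `Q` may be assumed at `z` only on the
-- scale of the interval itself.
lemma interval_induction {Q : ℝ → ℝ → Prop}
    (trans : ∀ p q r, p ≤ q → q ≤ r → Q p q → Q q r → Q p r)
    (loc : ∀ z, ∃ δ > 0, ∀ p q, p ≤ z → z ≤ q → q - p < δ → Q p q) {p q : ℝ} (hpq : p ≤ q) :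
    Q p q := by
  have hrefl : Q p p := by
    obtain ⟨δ, hδ, h⟩ := loc p
    exact h p p le_rfl le_rfl (by simpa using hδ)
  set S : Set ℝ := {c ∈ Icc p q | Q p c}
  have hpS : p ∈ S := ⟨left_mem_Icc.2 hpq, hrefl⟩
  have hbdd : BddAbove S := ⟨q, fun c hc => hc.1.2⟩
  obtain ⟨δ, hδ, hloc⟩ := loc (sSup S)
  obtain ⟨d, hdS, hd⟩ := exists_lt_of_lt_csSup ⟨p, hpS⟩ (by linarith : sSup S - δ / 2 < sSup S)
  have hdc : d ≤ sSup S := le_csSup hbdd hdS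
  have hcq : sSup S ≤ q := csSup_le ⟨p, hpS⟩ fun c hc => hc.1.2
  set e := min q (sSup S + δ / 4)
  have hce : sSup S ≤ e := le_min hcq (by linarith)
  have hQ : Q p e := trans p d e hdS.1.1 (hdc.trans hce) hdS.2
    (hloc d e hdc hce (by linarith [min_le_right q (sSup S + δ / 4)]))
  have hes : e ≤ sSup S :=
    le_csSup hbdd ⟨⟨(hdS.1.1.trans hdc).trans hce, min_le_left _ _⟩, hQ⟩
  have heq : e = q := (min_choice _ _).resolve_right fun h => by
    change e = _ at h
    linarith
  rwa [heq] at hQ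

lemma eventually_intervalIntegral_mul_le {ι : Type*} {l : Filter ι} {φ : ι → ℝ → ℝ} {g : ℝ → ℝ}
    {M p q : ℝ} (hM : 0 ≤ M) (hφ : ∀ᶠ i in l, Continuous (φ i)) (hφ₀ : ∀ᶠ i in l, ∀ x, 0 ≤ φ i x)
    (hloc : ∀ z, ∃ δ > 0, ∀ p q, p ≤ z → z ≤ q → q - p < δ →
      ∀ᶠ i in l, ∫ y in p..q, φ i y ≤ M * (q - p))
    (hg : Continuous g) (hg₀ : ∀ x, 0 < g x) (hpq : p ≤ q) :
    ∀ᶠ i in l, ∫ y in p..q, g y * φ i y ≤ 2 * M * ∫ y in p..q, g y := by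
  refine interval_induction (Q := fun p q =>
    ∀ᶠ i in l, ∫ y in p..q, g y * φ i y ≤ 2 * M * ∫ y in p..q, g y) ?_ (fun z => ?_) hpq
  · intro p q r _ _ hpq hqr
    filter_upwards [hpq, hqr, hφ] with i hpq hqr hφi
    have hint (p q : ℝ) : IntervalIntegrable (fun y => g y * φ i y) volume p q :=
      (hg.mul hφi).intervalIntegrable p q
    rw [← intervalIntegral.integral_add_adjacent_intervals (hint p q) (hint q r),
      ← intervalIntegral.integral_add_adjacent_intervals
        (hg.intervalIntegrable p q) (hg.intervalIntegrable q r)]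
    linarith
  obtain ⟨δ₁, hδ₁, hmass⟩ := hloc z
  have hnear : ∀ᶠ y in 𝓝 z, g y < 3 / 2 * g z ∧ 3 / 4 * g z < g y :=
    (hg.continuousAt.eventually (gt_mem_nhds (by linarith [hg₀ z]))).and
      (hg.continuousAt.eventually (lt_mem_nhds (by linarith [hg₀ z])))
  obtain ⟨δ₂, hδ₂, hball⟩ := Metric.eventually_nhds_iff.1 hnear
  refine ⟨min δ₁ δ₂, lt_min hδ₁ hδ₂, fun p q hp hq hlt => ?_⟩
  have hosc : ∀ y ∈ Icc p q, g y < 3 / 2 * g z ∧ 3 / 4 * g z < g y := fun y hy => by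
    refine hball ?_
    rw [Real.dist_eq, abs_lt]
    constructor <;> linarith [hy.1, hy.2, hlt.trans_le (min_le_right _ _)]
  filter_upwards [hmass p q hp hq (hlt.trans_le (min_le_left _ _)), hφ, hφ₀] with i hi hφi hφi₀
  have hlower : (q - p) * (3 / 4 * g z) ≤ ∫ y in p..q, g y := by
    rw [← smul_eq_mul, ← intervalIntegral.integral_const]
    exact intervalIntegral.integral_mono_on (hp.trans hq) intervalIntegrable_const
      (hg.intervalIntegrable p q) fun y hy => (hosc y hy).2.le
  calc ∫ y in p..q, g y * φ i y ≤ ∫ y in p..q, 3 / 2 * g z * φ i y :=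
        intervalIntegral.integral_mono_on (hp.trans hq) ((hg.mul hφi).intervalIntegrable p q)
          ((hφi.const_mul _).intervalIntegrable p q) fun y hy =>
            mul_le_mul_of_nonneg_right (hosc y hy).1.le (hφi₀ y)
    _ ≤ 3 / 2 * g z * (M * (q - p)) := by
        rw [intervalIntegral.integral_const_mul]
        exact mul_le_mul_of_nonneg_left hi (by linarith [hg₀ z])
    _ = 2 * M * ((q - p) * (3 / 4 * g z)) := by ring
    _ ≤ _ := by gcongr

section HeatKernelBounds

variable {τ β B ℓ R : ℝ} {g : ℝ → ℝ}

lemma one_le_mul_heatKernel {z : ℝ} (hℓ : 0 < ℓ) (hτ : ℓ ^ 2 / 2 ≤ τ) (hτ' : τ ≤ ℓ ^ 2)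
    (hz : |z| ≤ ℓ) : 1 ≤ 8 * ℓ * heatKernel τ z := by
  have hτ₀ : 0 < τ := by nlinarith
  have hsqrt : √(4 * Real.pi * τ) ≤ 4 * ℓ := by
    rw [Real.sqrt_le_left (by positivity)]
    nlinarith [Real.pi_lt_four, Real.pi_pos]
  have hexp : (1 : ℝ) / 2 ≤ Real.exp (-z ^ 2 / (4 * τ)) := by
    have hexponent : -(1 / 2) ≤ -z ^ 2 / (4 * τ) := by
      rw [le_div_iff₀ (by positivity)]
      nlinarith [sq_le_sq' (abs_le.1 hz).1 (abs_le.1 hz).2]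
    linarith [Real.add_one_le_exp (-z ^ 2 / (4 * τ))]
  calc (1 : ℝ) = 8 * ℓ * ((4 * ℓ)⁻¹ * (1 / 2)) := by field_simp; norm_num
    _ ≤ 8 * ℓ * heatKernel τ z := by
      have : 0 < √(4 * Real.pi * τ) := by positivity
      unfold heatKernel
      gcongr

lemma intervalIntegral_le_mul_heatSemigroup {p q z : ℝ} (hp : p ≤ z) (hq : z ≤ q) (hpq : p < q)
    (hτ : (q - p) ^ 2 / 2 ≤ τ) (hτ' : τ ≤ (q - p) ^ 2) (hg : Continuous g)
    (hB : ∀ y, |g y| ≤ B) (hg₀ : ∀ y, 0 ≤ g y) :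
    ∫ y in p..q, g y ≤ 8 * (q - p) * heatSemigroup τ g z := by
  have hℓ : 0 < q - p := sub_pos.2 hpq
  have hτ₀ : 0 < τ := by nlinarith
  have hint := integrable_heatKernel_sub_mul hτ₀.le hg hB z
  rw [intervalIntegral.integral_of_le hpq.le, heatSemigroup_eq_integral_heatKernel hτ₀ hg,
    ← integral_const_mul]
  calc ∫ y in Ioc p q, g y ≤ ∫ y in Ioc p q, 8 * (q - p) * (heatKernel τ (y - z) * g y) := by
        refine setIntegral_mono_on (hg.integrableOn_Icc.mono_set Ioc_subset_Icc_self)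
          (hint.const_mul _).integrableOn measurableSet_Ioc fun y hy => ?_
        rw [← mul_assoc]
        exact le_mul_of_one_le_left (hg₀ y) (one_le_mul_heatKernel hℓ hτ hτ'
          (abs_le.2 ⟨by linarith [hy.1], by linarith [hy.2]⟩))
    _ ≤ _ := setIntegral_le_integral (hint.const_mul _) (Eventually.of_forall fun y =>
        mul_nonneg (by positivity) (mul_nonneg (heatKernel_nonneg _ _) (hg₀ y)))

lemma heatKernel_le_heatKernel {z : ℝ} (hτ : 0 < τ) (hβ : 0 < β)
    (hz : √(β / τ) ≤ (1 / (4 * τ) - 1 / (4 * β)) * z ^ 2) : heatKernel τ z ≤ heatKernel β z := by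
  rw [heatKernel_eq_sqrt_mul_exp_mul hτ hβ]
  refine mul_le_of_le_one_left (heatKernel_nonneg _ _) ?_
  rw [Real.exp_neg, mul_inv_le_iff₀ (Real.exp_pos _), one_mul]
  linarith [Real.add_one_le_exp ((1 / (4 * τ) - 1 / (4 * β)) * z ^ 2)]

lemma exists_forall_heatKernel_le (hτ : 0 < τ) (hτβ : τ < β) :
    ∃ R > 0, ∀ β' ∈ Icc β 1, ∀ z, R ≤ |z| → heatKernel τ z ≤ heatKernel β' z := by
  have hβ : 0 < β := hτ.trans hτβ
  set c : ℝ := 1 / (4 * τ) - 1 / (4 * β)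
  have hc : 0 < c := sub_pos.2 (by gcongr)
  refine ⟨√(√(1 / τ) / c), by positivity, fun β' hβ' z hz => ?_⟩
  refine heatKernel_le_heatKernel hτ (hβ.trans_le hβ'.1) ?_
  have hz' : √(1 / τ) / c ≤ z ^ 2 := by
    rw [← sq_abs]
    exact (Real.sqrt_le_left (abs_nonneg z)).1 hz
  calc √(β' / τ) ≤ √(1 / τ) := by gcongr; exact hβ'.2
    _ ≤ c * z ^ 2 := by rwa [div_le_iff₀' hc] at hz'
    _ ≤ _ := by gcongr; exact sub_le_sub_left (by gcongr; exact hβ'.1) _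

lemma heatSemigroup_le_intervalIntegral_add (hτ : 0 < τ) (hβ : 0 < β) (hR : 0 ≤ R)
    (hker : ∀ z, R ≤ |z| → heatKernel τ z ≤ heatKernel β z) (hg : Continuous g)
    (hB : ∀ y, |g y| ≤ B) (hg₀ : ∀ y, 0 ≤ g y) (x : ℝ) :
    heatSemigroup τ g x ≤
      (∫ y in x - R..x + R, heatKernel τ (y - x) * g y) + heatSemigroup β g x := by
  have hintτ := integrable_heatKernel_sub_mul hτ.le hg hB x
  have hintβ := integrable_heatKernel_sub_mul hβ.le hg hB x
  rw [heatSemigroup_eq_integral_heatKernel hτ hg, heatSemigroup_eq_integral_heatKernel hβ hg,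
    intervalIntegral.integral_of_le (by linarith),
    ← integral_add_compl (measurableSet_Ioc (a := x - R) (b := x + R)) hintτ]
  gcongr
  calc ∫ y in (Ioc (x - R) (x + R))ᶜ, heatKernel τ (y - x) * g y
      ≤ ∫ y in (Ioc (x - R) (x + R))ᶜ, heatKernel β (y - x) * g y := by
        refine setIntegral_mono_on hintτ.integrableOn hintβ.integrableOn measurableSet_Ioc.compl
          fun y hy => mul_le_mul_of_nonneg_right (hker _ ?_) (hg₀ y)
        by_contra! hlt
        exact hy ⟨by linarith [(abs_lt.1 hlt).1], by linarith [(abs_lt.1 hlt).2]⟩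
    _ ≤ _ := setIntegral_le_integral hintβ
        (Eventually.of_forall fun y => mul_nonneg (heatKernel_nonneg _ _) (hg₀ y))

lemma integral_heatKernel_sub (hτ : 0 < τ) (x : ℝ) : ∫ y, heatKernel τ (y - x) = 1 := by
  simp_rw [heatKernel_sub_eq_gaussianPDFReal hτ.le]
  exact integral_gaussianPDFReal_eq_one _ (by positivity)

lemma heatSemigroup_le_two_mul (hτ : 0 < τ) (hβτ : β ≤ 2 * τ) (hτβ : τ ≤ β)
    (hg : Continuous g) (hB : ∀ y, |g y| ≤ B) (hg₀ : ∀ y, 0 ≤ g y) (x : ℝ) :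
    heatSemigroup τ g x ≤ 2 * heatSemigroup β g x := by
  refine (heatSemigroup_le_sqrt_mul hτ hτβ hg hB hg₀ x).trans
    (mul_le_mul_of_nonneg_right ?_ (heatSemigroup_nonneg hg₀ _ _))
  rw [Real.sqrt_le_left zero_le_two, div_le_iff₀ hτ]
  linarith

lemma tendsto_heatSemigroup {ι : Type*} {l : Filter ι} [l.IsCountablyGenerated]
    {φ : ι → ℝ → ℝ} (hφ : ∀ᶠ i in l, Continuous (φ i)) (hB : ∀ᶠ i in l, ∀ y, |φ i y| ≤ B)
    (hlim : ∀ y, Tendsto (fun i => φ i y) l (𝓝 (g y))) (τ x : ℝ) :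
    Tendsto (fun i => heatSemigroup τ (φ i) x) l (𝓝 (heatSemigroup τ g x)) := by
  refine tendsto_integral_filter_of_dominated_convergence (fun _ => B)
    (hφ.mono fun i hi => Continuous.aestronglyMeasurable (by fun_prop))
    (hB.mono fun i hi => Eventually.of_forall fun y => hi _) (integrable_const _)
    (Eventually.of_forall fun y => hlim _)

end HeatKernelBounds

/-- `(a, b) ⊆ [0, T)` is a time interval of length at most one such that the slices of `w` share a
bound and a Lipschitz constant on each compact subinterval. Nothing is assumed about how these
constants behave near `a` and `b`. -/
structure IsGap (T : ℝ) (w : ℝ → ℝ → ℝ) (a b : ℝ) : Prop where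
  nonneg : 0 ≤ a
  lt : a < b
  lt_right : b < T
  length_le : b - a ≤ 1
  exists_boundedLip : ∀ σ s, a < σ → s < b → ∃ B, ∀ r ∈ Icc σ s, BoundedLip B (w r)

section Gap

variable {f : ℝ → ℝ} {T : ℝ} {w : ℝ → ℝ → ℝ} {F L N K a b σ s τ : ℝ}

lemma IsGap.Icc_subset (hG : IsGap T w a b) : Icc a b ⊆ Ico 0 T :=
  fun _ hr => ⟨hG.nonneg.trans hr.1, hr.2.trans_lt hG.lt_right⟩

lemma IsGap.eventually_mem (hG : IsGap T w a b) : ∀ᶠ σ in 𝓝[>] a, σ ∈ Ico 0 T :=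
  mem_of_superset (Ioo_mem_nhdsGT hG.lt) (Ioo_subset_Icc_self.trans hG.Icc_subset)

lemma IsNonnegSolution.heatSemigroup_le (hw : IsNonnegSolution f T w) (hf₀ : ∀ x, 0 ≤ f x)
    (hF : ∀ x, f x ≤ F) (hG : IsGap T w a b) (hσ : a < σ) (hσs : σ ≤ s) (hs : s < b) (x : ℝ) :
    heatSemigroup (s - σ) (w σ) x ≤ Real.exp (2 * F) * w s x := by
  obtain ⟨B, hB⟩ := hG.exists_boundedLip σ s hσ hs
  have hsub : Icc σ s ⊆ Ico 0 T := (Icc_subset_Icc hσ.le hs.le).trans hG.Icc_subset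
  have hF₀ : 0 ≤ F := (hf₀ 0).trans (hF 0)
  have hexp : Real.exp (-(2 * F)) ≤ Real.exp (-2 * F * (s - σ)) := by
    gcongr
    nlinarith [hG.length_le]
  rw [← inv_mul_le_iff₀ (Real.exp_pos _), ← Real.exp_neg]
  exact (mul_le_mul_of_nonneg_right hexp (heatSemigroup_nonneg (hw.nonneg σ (hsub ⟨le_rfl, hσs⟩))
    _ _)).trans (hw.exp_mul_heatSemigroup_le hf₀ hF hsub hσs hB x)

lemma IsNonnegSolution.heatSemigroup_le_right (hw : IsNonnegSolution f T w)
    (hf₀ : ∀ x, 0 ≤ f x) (hF : ∀ x, f x ≤ F) (hG : IsGap T w a b) (hσ : a < σ) (hσb : σ < b)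
    (x : ℝ) : heatSemigroup (b - σ) (w σ) x ≤ Real.exp (2 * F) * w b x := by
  have hσT : σ ∈ Ico 0 T := hG.Icc_subset ⟨hσ.le, hσb.le⟩
  obtain ⟨B, hB⟩ := hw.boundedLip σ hσT
  have hleft : Tendsto (fun s => heatSemigroup (s - σ) (w σ) x) (𝓝[<] b)
      (𝓝 (heatSemigroup (b - σ) (w σ) x)) :=
    (((continuous_heatSemigroup_sub (hw.continuous hσT) hB.abs_le σ).comp
      (by fun_prop : Continuous fun s : ℝ => (s, x))).tendsto b).mono_left nhdsWithin_le_nhds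
  have hright : Tendsto (fun s => Real.exp (2 * F) * w s x) (𝓝[<] b)
      (𝓝 (Real.exp (2 * F) * w b x)) :=
    ((hw.continuousAt_time (hG.Icc_subset (right_mem_Icc.2 hG.lt.le)) x).tendsto.mono_left
      nhdsWithin_le_nhds).const_mul _
  refine le_of_tendsto_of_tendsto hleft hright ?_
  filter_upwards [Ioo_mem_nhdsLT hσb] with s hs
  exact hw.heatSemigroup_le hf₀ hF hG hσ hs.1.le hs.2 x

-- Pointwise continuity at `(a, z)` bounds `w` at time `a + ℓ²`, which controls the mass of the
-- slices just after `a` on an interval of length `ℓ` around `z`.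
lemma IsNonnegSolution.exists_intervalIntegral_le (hw : IsNonnegSolution f T w)
    (hf₀ : ∀ x, 0 ≤ f x) (hF : ∀ x, f x ≤ F) (hG : IsGap T w a b) (hN : ∀ x, w a x ≤ N) (z : ℝ) :
    ∃ δ > 0, ∀ p q, p ≤ z → z ≤ q → q - p < δ → ∀ᶠ σ in 𝓝[>] a,
      ∫ y in p..q, w σ y ≤ 8 * (Real.exp (2 * F) * (N + 1)) * (q - p) := by
  have hnear : ∀ᶠ r in 𝓝 a, w r z < N + 1 :=
    (hw.continuousAt_time (hG.Icc_subset (left_mem_Icc.2 hG.lt.le)) z).eventually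
      (gt_mem_nhds (by linarith [hN z]))
  obtain ⟨ε, hε, hball⟩ := Metric.eventually_nhds_iff.1 hnear
  have hba : 0 < b - a := sub_pos.2 hG.lt
  refine ⟨min ε (b - a), lt_min hε hba, fun p q hp hq hpq => ?_⟩
  rcases (hp.trans hq).eq_or_lt with rfl | hlt
  · simp
  set ℓ := q - p
  have : 0 < ℓ := sub_pos.2 hlt
  have hℓε : ℓ < ε := hpq.trans_le (min_le_left _ _)
  have hℓb : ℓ < b - a := hpq.trans_le (min_le_right _ _)
  have hsq : ℓ ^ 2 ≤ ℓ := by nlinarith [hG.length_le]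
  have hsq₀ : 0 < ℓ ^ 2 := by positivity
  have hval : w (a + ℓ ^ 2) z ≤ N + 1 := by
    refine (hball ?_).le
    rw [Real.dist_eq, add_sub_cancel_left, abs_of_pos hsq₀]
    linarith
  filter_upwards [Ioo_mem_nhdsGT (by linarith : a < a + ℓ ^ 2 / 2)] with σ hσ
  have hσT : σ ∈ Ico 0 T := hG.Icc_subset ⟨hσ.1.le, by linarith [hσ.2]⟩
  obtain ⟨B, hB⟩ := hw.boundedLip σ hσT
  calc _ ≤ 8 * ℓ * heatSemigroup (a + ℓ ^ 2 - σ) (w σ) z :=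
        intervalIntegral_le_mul_heatSemigroup hp hq hlt (by linarith [hσ.2]) (by linarith [hσ.1])
          (hw.continuous hσT) hB.abs_le (hw.nonneg σ hσT)
    _ ≤ 8 * ℓ * (Real.exp (2 * F) * w (a + ℓ ^ 2) z) := by
        gcongr
        exact hw.heatSemigroup_le hf₀ hF hG hσ.1 (by linarith [hσ.2]) (by linarith) z
    _ ≤ 8 * ℓ * (Real.exp (2 * F) * (N + 1)) := by gcongr
    _ = _ := by ring

lemma IsNonnegSolution.eventually_heatSemigroup_le (hw : IsNonnegSolution f T w)
    (hf₀ : ∀ x, 0 ≤ f x) (hF : ∀ x, f x ≤ F) (hG : IsGap T w a b)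
    (hNa : ∀ x, w a x ≤ N) (hNb : ∀ x, w b x ≤ N) (has : a < s) (hsb : s < b) (x : ℝ) :
    ∀ᶠ σ in 𝓝[>] a, heatSemigroup (s - a) (w σ) x ≤ 17 * (Real.exp (2 * F) * (N + 1)) := by
  have hτ : 0 < s - a := sub_pos.2 has
  have hN₀ : 0 ≤ N :=
    (hw.nonneg a (hG.Icc_subset (left_mem_Icc.2 hG.lt.le)) 0).trans (hNa 0)
  set κ := Real.exp (2 * F) * (N + 1)
  obtain ⟨R, hR, hker⟩ := exists_forall_heatKernel_le hτ (by linarith : s - a < (s + b) / 2 - a)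
  have hcore := eventually_intervalIntegral_mul_le (M := 8 * κ) (p := x - R) (q := x + R)
    (g := fun y => heatKernel (s - a) (y - x)) (by positivity)
    (hG.eventually_mem.mono fun σ hσ => hw.continuous hσ) (hG.eventually_mem.mono hw.nonneg)
    (hw.exists_intervalIntegral_le hf₀ hF hG hNa)
    ((continuous_heatKernel _).comp (continuous_sub_right x)) (fun y => heatKernel_pos hτ _)
    (by linarith)
  filter_upwards [hcore, Ioo_mem_nhdsGT (by linarith : a < a + (b - s) / 2)] with σ hσκ hσ
  have hσT : σ ∈ Ico 0 T := hG.Icc_subset ⟨hσ.1.le, by linarith [hσ.2]⟩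
  obtain ⟨B, hB⟩ := hw.boundedLip σ hσT
  have hmass : ∫ y in x - R..x + R, heatKernel (s - a) (y - x) ≤ 1 := by
    rw [← integral_heatKernel_sub hτ x, intervalIntegral.integral_of_le (by linarith)]
    exact setIntegral_le_integral (integrable_heatKernel_sub hτ.le x)
      (Eventually.of_forall fun y => heatKernel_nonneg _ _)
  have hright : heatSemigroup (b - σ) (w σ) x ≤ κ :=
    (hw.heatSemigroup_le_right hf₀ hF hG hσ.1 (by linarith [hσ.2]) x).trans
      (mul_le_mul_of_nonneg_left (by linarith [hNb x]) (Real.exp_pos _).le)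
  have hsplit := heatSemigroup_le_intervalIntegral_add hτ (by linarith [hσ.2] : 0 < b - σ) hR.le
    (hker _ ⟨by linarith [hσ.2], by linarith [hσ.1, hG.length_le]⟩) (hw.continuous hσT) hB.abs_le
    (hw.nonneg σ hσT) x
  linarith [mul_le_of_le_one_right (by positivity : 0 ≤ 2 * (8 * κ)) hmass]

lemma IsNonnegSolution.heatSemigroup_le_div_sqrt (hw : IsNonnegSolution f T w)
    (hf₀ : ∀ x, 0 ≤ f x) (hF : ∀ x, f x ≤ F) (hG : IsGap T w a b) (hN : ∀ x, w b x ≤ N)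
    (hσ : a < σ) (hτ : 0 < τ) (hτb : τ ≤ b - σ) (x : ℝ) :
    heatSemigroup τ (w σ) x ≤ Real.exp (2 * F) * N / √τ := by
  have hσb : σ < b := by linarith
  have hσT : σ ∈ Ico 0 T := hG.Icc_subset ⟨hσ.le, hσb.le⟩
  obtain ⟨B, hB⟩ := hw.boundedLip σ hσT
  calc heatSemigroup τ (w σ) x ≤ √((b - σ) / τ) * heatSemigroup (b - σ) (w σ) x :=
        heatSemigroup_le_sqrt_mul hτ hτb (hw.continuous hσT) hB.abs_le (hw.nonneg σ hσT) x
    _ ≤ √(1 / τ) * (Real.exp (2 * F) * w b x) := by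
        gcongr
        · exact heatSemigroup_nonneg (hw.nonneg σ hσT) _ _
        · linarith [hG.length_le]
        · exact hw.heatSemigroup_le_right hf₀ hF hG hσ hσb x
    _ ≤ √(1 / τ) * (Real.exp (2 * F) * N) := by gcongr; exact hN x
    _ = Real.exp (2 * F) * N / √τ := by rw [Real.sqrt_div zero_le_one, Real.sqrt_one]; ring

lemma IsNonnegSolution.le_of_isGap (hw : IsNonnegSolution f T w)
    (hf₀ : ∀ x, 0 ≤ f x) (hF : ∀ x, f x ≤ F) (hG : IsGap T w a b)
    (hNa : ∀ x, w a x ≤ N) (hNb : ∀ x, w b x ≤ N) {κ : ℝ}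
    (hκ : κ = Real.exp (2 * F) * (N + 1)) (has : a < s) (hsb : s < b) (x : ℝ) :
    w s x ≤ 68 * κ + 8 * κ ^ 2 := by
  have hN₀ : 0 ≤ N :=
    (hw.nonneg a (hG.Icc_subset (left_mem_Icc.2 hG.lt.le)) 0).trans (hNa 0)
  have hκ₀ : 0 < κ := by rw [hκ]; positivity
  have hdecay : ∀ σ, a < σ → ∀ τ, 0 < τ → τ ≤ b - σ → ∀ y, heatSemigroup τ (w σ) y ≤ κ / √τ := by
    rw [hκ]
    exact fun σ hσ τ hτ hτb y => hw.heatSemigroup_le_div_sqrt hf₀ hF hG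
      (fun x => (hNb x).trans (by linarith)) hσ hτ hτb y
  set τ₀ : ℝ := (1 / (4 * κ)) ^ 2
  have hτ₀pos : 0 < τ₀ := by positivity
  have hsqrt : √τ₀ = 1 / (4 * κ) := Real.sqrt_sq (by positivity)
  have hcmp : ∀ σ, a < σ → σ < s → s - σ ≤ τ₀ → w s x ≤ 2 * heatSemigroup (s - σ) (w σ) x := by
    intro σ hσ hσs hστ
    obtain ⟨B, hB⟩ := hG.exists_boundedLip σ s hσ hsb
    refine hw.le_two_mul_heatSemigroup hf₀ ((Icc_subset_Icc hσ.le hsb.le).trans hG.Icc_subset)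
      hσs.le hB hκ₀.le (fun τ hτ hτs => hdecay σ hσ τ hτ (by linarith)) ?_ x
    calc 4 * κ * √(s - σ) ≤ 4 * κ * √τ₀ := by gcongr
      _ = 1 := by rw [hsqrt]; field_simp
  rcases lt_or_ge τ₀ (s - a) with hlong | hshort
  · have hσ := hcmp (s - τ₀) (by linarith) (by linarith) (by linarith)
    have hτ := hdecay (s - τ₀) (by linarith) τ₀ hτ₀pos (by linarith) x
    have hval : κ / √τ₀ = 4 * κ ^ 2 := by rw [hsqrt]; field_simp
    rw [sub_sub_cancel] at hσ
    linarith
  · obtain ⟨σ, hσκ, hσ⟩ := ((hw.eventually_heatSemigroup_le hf₀ hF hG hNa hNb has hsb x).and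
      (Ioo_mem_nhdsGT (by linarith : a < a + (s - a) / 2))).exists
    have hσT : σ ∈ Ico 0 T := hG.Icc_subset ⟨hσ.1.le, by linarith [hσ.2]⟩
    obtain ⟨B, hB⟩ := hw.boundedLip σ hσT
    have hdouble := heatSemigroup_le_two_mul (τ := s - σ) (β := s - a) (by linarith [hσ.2])
      (by linarith [hσ.2]) (by linarith [hσ.1]) (hw.continuous hσT) hB.abs_le (hw.nonneg σ hσT) x
    rw [← hκ] at hσκ
    nlinarith [hcmp σ hσ.1 (by linarith [hσ.2]) (by linarith [hσ.1])]

lemma IsNonnegSolution.abs_increment_le (hw : IsNonnegSolution f T w) (hs : s ∈ Ico 0 T)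
    (hK : ∀ x, w s x ≤ K) (h x : ℝ) : |w s (x + h) - w s x| ≤ K :=
  abs_le.2 ⟨by linarith [hK x, hw.nonneg s hs (x + h)], by linarith [hK (x + h), hw.nonneg s hs x]⟩

lemma IsNonnegSolution.increment_le_two_mul_heatSemigroup (hw : IsNonnegSolution f T w)
    (hf₀ : ∀ x, 0 ≤ f x) (hL : ∀ x y, |f x - f y| ≤ L * |x - y|) (hG : IsGap T w a b)
    (hK : ∀ r ∈ Ioo a b, ∀ x, w r x ≤ K) (hs : s ∈ Ioo a b) (hσ : σ ∈ Ioo a (a + (s - a) / 2))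
    (h x : ℝ) :
    w s (x + h) - w s x ≤ Real.exp (2 * K) *
      (2 * heatSemigroup (s - a) (fun y => |w σ (y + h) - w σ y|) x + 2 * L * K * |h|) := by
  have hL₀ : 0 ≤ L := by simpa using (abs_nonneg _).trans (hL 1 0)
  have hK₀ : 0 ≤ K := (hw.nonneg s (hG.Icc_subset (Ioo_subset_Icc_self hs)) 0).trans (hK s hs 0)
  have hσs : σ < s := by linarith [hσ.2, hs.1]
  have hσT : σ ∈ Ico 0 T := hG.Icc_subset ⟨hσ.1.le, hσs.le.trans hs.2.le⟩
  have hlen : s - σ ≤ 1 := by linarith [hσ.1, hs.2, hG.length_le]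
  obtain ⟨B, hB⟩ := hG.exists_boundedLip σ s hσ.1 hs.2
  have hg₀ : ∀ y, 0 ≤ |w σ (y + h) - w σ y| := fun y => abs_nonneg _
  have hg : Continuous fun y => |w σ (y + h) - w σ y| := by
    have := hw.continuous hσT
    fun_prop
  refine (hw.increment_le hf₀ hL ((Icc_subset_Icc hσ.1.le hs.2.le).trans hG.Icc_subset) hσs.le hB
    (fun r hr => hK r ⟨hσ.1.trans_le hr.1, hr.2.trans_lt hs.2⟩) h x).trans ?_
  refine mul_le_mul (Real.exp_le_exp.2 (mul_le_of_le_one_right (by positivity) hlen))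
    (add_le_add ?_ (mul_le_of_le_one_right (by positivity) hlen))
    (add_nonneg (heatSemigroup_nonneg hg₀ _ _)
      (mul_nonneg (by positivity) (sub_nonneg.2 hσs.le))) (Real.exp_pos _).le
  exact heatSemigroup_le_two_mul (sub_pos.2 hσs) (by linarith [hσ.2]) (by linarith [hσ.1]) hg
    (fun y => (abs_abs _).trans_le (hw.abs_increment_le hσT (hK σ ⟨hσ.1, hσs.trans hs.2⟩) h y))
    hg₀ x

lemma IsNonnegSolution.increment_le_of_isGap (hw : IsNonnegSolution f T w)
    (hf₀ : ∀ x, 0 ≤ f x) (hL : ∀ x y, |f x - f y| ≤ L * |x - y|) (hG : IsGap T w a b)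
    (hNa : BoundedLip N (w a)) (hK : ∀ r ∈ Ioo a b, ∀ x, w r x ≤ K) (hs : s ∈ Ioo a b) (h x : ℝ) :
    w s (x + h) - w s x ≤ Real.exp (2 * K) * (2 * N + 2 * L * K) * |h| := by
  have haT : a ∈ Ico 0 T := hG.Icc_subset (left_mem_Icc.2 hG.lt.le)
  have hlim : Tendsto (fun σ => heatSemigroup (s - a) (fun y => |w σ (y + h) - w σ y|) x)
      (𝓝[>] a) (𝓝 (heatSemigroup (s - a) (fun y => |w a (y + h) - w a y|) x)) := by
    refine tendsto_heatSemigroup (B := K) ?_ ?_ (fun y => ?_) _ _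
    · filter_upwards [hG.eventually_mem] with σ hσ
      have := hw.continuous hσ
      fun_prop
    · filter_upwards [Ioo_mem_nhdsGT hG.lt, hG.eventually_mem] with σ hσ hσT y
      exact (abs_abs _).trans_le (hw.abs_increment_le hσT (hK σ hσ) h y)
    · exact ((hw.continuousAt_time haT (y + h)).sub
        (hw.continuousAt_time haT y)).abs.tendsto.mono_left nhdsWithin_le_nhds
  have hinit : heatSemigroup (s - a) (fun y => |w a (y + h) - w a y|) x ≤ N * |h| :=
    le_of_abs_le (abs_heatSemigroup_le (fun y => by simpa using hNa.abs_sub_le (y + h) y) _ _)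
  have hbound := ge_of_tendsto
    (((hlim.const_mul 2).add_const (2 * L * K * |h|)).const_mul (Real.exp (2 * K)))
    (by
      filter_upwards [Ioo_mem_nhdsGT (by linarith [hs.1] : a < a + (s - a) / 2)] with σ hσ
      exact hw.increment_le_two_mul_heatSemigroup hf₀ hL hG hK hs hσ h x)
  rw [mul_assoc]
  exact hbound.trans (mul_le_mul_of_nonneg_left (by linarith) (Real.exp_pos _).le)

theorem IsNonnegSolution.exists_boundedLip_of_isGap (hw : IsNonnegSolution f T w)
    (hf₀ : ∀ x, 0 ≤ f x) (hF : ∀ x, f x ≤ F) (hL : ∀ x y, |f x - f y| ≤ L * |x - y|) (N : ℝ) :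
    ∃ B, ∀ a b, IsGap T w a b → BoundedLip N (w a) → BoundedLip N (w b) →
      ∀ s ∈ Ioo a b, BoundedLip B (w s) := by
  set κ := Real.exp (2 * F) * (N + 1) with hκ
  set K := 68 * κ + 8 * κ ^ 2
  set M := Real.exp (2 * K) * (2 * N + 2 * L * K)
  refine ⟨max K M, fun a b hG hNa hNb s hs => ?_⟩
  have hK : ∀ s ∈ Ioo a b, ∀ x, w s x ≤ K := fun s hs x =>
    hw.le_of_isGap hf₀ hF hG (fun x => le_of_abs_le (hNa.abs_le x))
      (fun x => le_of_abs_le (hNb.abs_le x)) hκ hs.1 hs.2 x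
  have hM : ∀ x y, w s x - w s y ≤ max K M * |x - y| := fun x y => by
    have := hw.increment_le_of_isGap hf₀ hL hG hNa hK hs (x - y) y
    rw [add_sub_cancel] at this
    exact this.trans (by gcongr; exact le_max_right _ _)
  refine ⟨fun x => ?_, fun x y => abs_le'.2 ⟨hM x y, ?_⟩⟩
  · rw [abs_of_nonneg (hw.nonneg s (hG.Icc_subset (Ioo_subset_Icc_self hs)) x)]
    exact (hK s hs x).trans (le_max_left _ _)
  · rw [neg_sub, abs_sub_comm]
    exact hM y x

end Gap

/-! ### Uniform bounds from slicewise bounds -/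

/-- The slices of `w` at times close to `s` share a bound and a Lipschitz constant. -/
def LocallyBoundedAt (T : ℝ) (w : ℝ → ℝ → ℝ) (s : ℝ) : Prop :=
  ∃ B, ∀ᶠ r in 𝓝 s, r ∈ Ico 0 T → BoundedLip B (w r)

section Baire

variable {f : ℝ → ℝ} {T T₁ : ℝ} {w : ℝ → ℝ → ℝ} {F L N a b s : ℝ} {E P : Set ℝ}

lemma isOpen_setOf_locallyBoundedAt : IsOpen {s | LocallyBoundedAt T w s} := by
  simp only [LocallyBoundedAt, ofPred_exists]
  exact isOpen_iUnion fun _ => isOpen_setOfPred_eventually_nhds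

lemma exists_boundedLip_of_locallyBoundedAt (hsub : Icc a b ⊆ Ico 0 T)
    (h : ∀ s ∈ Icc a b, LocallyBoundedAt T w s) : ∃ B, ∀ s ∈ Icc a b, BoundedLip B (w s) := by
  suffices ∃ B, ∀ s ∈ Icc a b, s ∈ Ico 0 T → BoundedLip B (w s) from
    this.imp fun B hB s hs => hB s hs (hsub hs)
  refine isCompact_Icc.induction_on (p := fun S => ∃ B, ∀ s ∈ S, s ∈ Ico 0 T → BoundedLip B (w s))
    ⟨0, by simp⟩ (fun S S' hSS' ⟨B, hB⟩ => ⟨B, fun s hs => hB s (hSS' hs)⟩) ?_ fun s hs => ?_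
  · rintro S S' ⟨B, hB⟩ ⟨B', hB'⟩
    refine ⟨max B B', fun s hs hsT => hs.elim (fun hs => ?_) fun hs => ?_⟩
    · exact (hB s hs hsT).mono (le_max_left _ _)
    · exact (hB' s hs hsT).mono (le_max_right _ _)
  · obtain ⟨B, hB⟩ := h s hs
    exact ⟨_, mem_nhdsWithin_of_mem_nhds hB, B, fun r hr => hr⟩

lemma exists_Ioo_subset_compl (hE : IsClosed E) (ha : a ∈ E) (hb : b ∈ E)
    (hs : s ∈ Icc a b) (hsE : s ∉ E) :
    ∃ a' ∈ E, ∃ b' ∈ E, a ≤ a' ∧ b' ≤ b ∧ s ∈ Ioo a' b' ∧ Ioo a' b' ⊆ Eᶜ := by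
  have hleft : IsCompact (E ∩ Icc a s) := isCompact_Icc.inter_left hE
  have hright : IsCompact (E ∩ Icc s b) := isCompact_Icc.inter_left hE
  have ha' := hleft.sSup_mem ⟨a, ha, le_rfl, hs.1⟩
  have hb' := hright.sInf_mem ⟨b, hb, hs.2, le_rfl⟩
  refine ⟨_, ha'.1, _, hb'.1, ha'.2.1, hb'.2.2, ⟨ha'.2.2.lt_of_ne fun h => hsE (h ▸ ha'.1),
    hb'.2.1.lt_of_ne fun h => hsE (h ▸ hb'.1)⟩, fun r hr hrE => ?_⟩
  rcases le_total r s with hrs | hsr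
  · exact hr.1.not_ge (le_csSup hleft.bddAbove ⟨hrE, ha'.2.1.trans hr.1.le, hrs⟩)
  · exact hr.2.not_ge (csInf_le hright.bddBelow ⟨hrE, hsr, hr.2.le.trans hb'.2.2⟩)

lemma IsNonnegSolution.exists_boundedLip_of_isClosed (hw : IsNonnegSolution f T w)
    (hf₀ : ∀ x, 0 ≤ f x) (hF : ∀ x, f x ≤ F) (hL : ∀ x y, |f x - f y| ≤ L * |x - y|)
    (ha : 0 ≤ a) (hb : b < T) (hab : b - a ≤ 1) (hE : IsClosed E) (haE : a ∈ E) (hbE : b ∈ E)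
    (hN : ∀ s ∈ E ∩ Icc a b, BoundedLip N (w s))
    (hgood : ∀ s ∈ Icc a b \ E, LocallyBoundedAt T w s) :
    ∃ B, ∀ s ∈ Icc a b, BoundedLip B (w s) := by
  obtain ⟨B, hB⟩ := hw.exists_boundedLip_of_isGap hf₀ hF hL N
  refine ⟨max N B, fun s hs => ?_⟩
  by_cases hsE : s ∈ E
  · exact (hN s ⟨hsE, hs⟩).mono (le_max_left _ _)
  obtain ⟨a', ha'E, b', hb'E, haa', hbb', hs', hsub⟩ := exists_Ioo_subset_compl hE haE hbE hs hsE
  have hlt : a' < b' := hs'.1.trans hs'.2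
  have hG : IsGap T w a' b' :=
    { nonneg := ha.trans haa'
      lt := hlt
      lt_right := hbb'.trans_lt hb
      length_le := by linarith
      exists_boundedLip := fun σ r hσ hr => exists_boundedLip_of_locallyBoundedAt
        (fun r' hr' => ⟨(ha.trans haa').trans (hσ.le.trans hr'.1),
          (hr'.2.trans_lt hr).trans (hbb'.trans_lt hb)⟩)
        fun r' hr' => have hr'' : r' ∈ Ioo a' b' := ⟨hσ.trans_le hr'.1, hr'.2.trans_lt hr⟩
          hgood r' ⟨⟨haa'.trans hr''.1.le, hr''.2.le.trans hbb'⟩, hsub hr''⟩ }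
  exact (hB a' b' hG (hN a' ⟨ha'E, haa', hlt.le.trans hbb'⟩)
    (hN b' ⟨hb'E, haa'.trans hlt.le, hbb'⟩) s hs').mono (le_max_right _ _)

lemma IsNonnegSolution.isClosed_setOf_boundedLip (hw : IsNonnegSolution f T w)
    (hPT : P ⊆ Ico 0 T) (N : ℝ) : IsClosed {r : P | BoundedLip N (w r)} := by
  have hcont : ∀ x, Continuous fun r : P => w r x := fun x =>
    continuous_iff_continuousAt.2 fun r => ContinuousAt.comp (f := fun r : P => (r : ℝ))
      (g := fun r => w r x) (hw.continuousAt_time (hPT r.2) x) continuous_subtype_val.continuousAt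
  have hinter : {r : P | BoundedLip N (w r)} = (⋂ x, {r : P | |w r x| ≤ N}) ∩
      ⋂ x, ⋂ y, {r : P | |w r x - w r y| ≤ N * |x - y|} := by
    ext r
    simp only [mem_ofPred_eq, mem_inter_iff, mem_iInter]
    exact ⟨fun h => ⟨h.abs_le, h.abs_sub_le⟩, fun h => ⟨h.1, h.2⟩⟩
  rw [hinter]
  exact (isClosed_iInter fun x => isClosed_le (hcont x).abs continuous_const).inter
    (isClosed_iInter fun x => isClosed_iInter fun y =>
      isClosed_le ((hcont x).sub (hcont y)).abs continuous_const)

lemma IsNonnegSolution.exists_eventually_boundedLip (hw : IsNonnegSolution f T w)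
    (hP : IsLocallyClosed P) (hne : P.Nonempty) (hPT : P ⊆ Ico 0 T) :
    ∃ c ∈ P, ∃ N, ∀ᶠ r in 𝓝[P] c, BoundedLip N (w r) := by
  have : Nonempty P := hne.to_subtype
  have : LocallyCompactSpace P := hP.locallyCompactSpace
  have hcover : ⋃ n : ℕ, {r : P | BoundedLip n (w r)} = univ :=
    eq_univ_of_forall fun r => mem_iUnion.2 <| by
      obtain ⟨B, hB⟩ := hw.boundedLip r (hPT r.2)
      obtain ⟨n, hn⟩ := exists_nat_ge B
      exact ⟨n, hB.mono hn⟩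
  obtain ⟨n, c, hc⟩ := nonempty_interior_of_iUnion_of_closed
    (fun n : ℕ => hw.isClosed_setOf_boundedLip hPT n) hcover
  exact ⟨c, c.2, n, (eventually_nhds_subtype_iff P c _).1 (mem_interior_iff_mem_nhds.1 hc)⟩

-- By Baire, the bad times in some neighbourhood of a bad time share a bound; filling in the gaps
-- between them would make that time good.
lemma IsNonnegSolution.locallyBoundedAt (hw : IsNonnegSolution f T w)
    (hf₀ : ∀ x, 0 ≤ f x) (hF : ∀ x, f x ≤ F) (hL : ∀ x y, |f x - f y| ≤ L * |x - y|)
    (hs : s ∈ Ico 0 T) : LocallyBoundedAt T w s := by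
  by_contra hbad
  have hclosed : IsClosed {r | ¬ LocallyBoundedAt T w r} :=
    isOpen_setOf_locallyBoundedAt.isClosed_compl
  obtain ⟨c, ⟨hcbad, hcT⟩, N, hcN⟩ := hw.exists_eventually_boundedLip
    (hclosed.isLocallyClosed.inter isLocallyClosed_Ico) ⟨s, hbad, hs⟩ inter_subset_right
  obtain ⟨ε₀, hε₀, hball⟩ := Metric.eventually_nhds_iff.1 (eventually_nhdsWithin_iff.1 hcN)
  obtain ⟨ε, hε, hεε₀, hε₁, hεT⟩ : ∃ ε > 0, ε < ε₀ ∧ ε ≤ 1 / 2 ∧ ε < T - c := by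
    obtain ⟨ε, hε, hlt⟩ := exists_between (lt_min hε₀ (lt_min one_half_pos (sub_pos.2 hcT.2)))
    rw [lt_min_iff, lt_min_iff] at hlt
    exact ⟨ε, hε, hlt.1, hlt.2.1.le, hlt.2.2⟩
  set a := max 0 (c - ε)
  have ha₀ : 0 ≤ a := le_max_left _ _
  have hac : c - ε ≤ a := le_max_right _ _
  have hca : a ≤ c := max_le hcT.1 (by linarith)
  have hbT : c + ε < T := by linarith
  obtain ⟨B₁, hB₁⟩ := hw.boundedLip a ⟨ha₀, by linarith⟩
  obtain ⟨B₂, hB₂⟩ := hw.boundedLip (c + ε) ⟨by linarith, hbT⟩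
  have hN : ∀ r ∈ ({r | ¬ LocallyBoundedAt T w r} ∪ {a, c + ε}) ∩ Icc a (c + ε),
      BoundedLip (max N (max B₁ B₂)) (w r) := by
    rintro r ⟨hr | rfl | rfl, hrI⟩
    · refine (hball ?_ ⟨hr, ha₀.trans hrI.1, hrI.2.trans_lt hbT⟩).mono (le_max_left _ _)
      rw [Real.dist_eq, abs_lt]
      constructor <;> linarith [hrI.1, hrI.2]
    · exact hB₁.mono ((le_max_left _ _).trans (le_max_right _ _))
    · exact hB₂.mono ((le_max_right _ _).trans (le_max_right _ _))
  obtain ⟨B, hB⟩ := hw.exists_boundedLip_of_isClosed hf₀ hF hL ha₀ hbT (by linarith)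
    (hclosed.union (toFinite _).isClosed) (by simp) (by simp) hN
    fun r hr => not_not.1 fun hrbad => hr.2 (Or.inl hrbad)
  refine hcbad ⟨B, ?_⟩
  filter_upwards [Ioo_mem_nhds (sub_lt_self c hε) (lt_add_of_pos_right c hε)] with r hr hrT
  exact hB r ⟨max_le hrT.1 hr.1.le, hr.2.le⟩

theorem IsNonnegSolution.exists_boundedLip (hw : IsNonnegSolution f T w) (hf₀ : ∀ x, 0 ≤ f x)
    (hF : ∀ x, f x ≤ F) (hL : ∀ x y, |f x - f y| ≤ L * |x - y|) (hT₁ : T₁ < T) :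
    ∃ B, ∀ s ∈ Icc 0 T₁, BoundedLip B (w s) :=
  exists_boundedLip_of_locallyBoundedAt (Icc_subset_Ico_right hT₁) fun _ hs =>
    hw.locallyBoundedAt hf₀ hF hL (Icc_subset_Ico_right hT₁ hs)

end Baire

/-! ### Testing the heat semigroup against an integrable function -/

section Correlation

variable {m φ : ℝ → ℝ} {B : ℝ}

lemma integrable_mul_of_abs_le {α : Type*} [MeasurableSpace α] {μ : Measure α} {m φ : α → ℝ}
    (hm : Integrable m μ) (hφ : Measurable φ) (hB : ∀ x, |φ x| ≤ B) :
    Integrable (fun x => m x * φ x) μ :=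
  hm.mul_bdd (c := B) hφ.aestronglyMeasurable (Eventually.of_forall hB)

lemma integrable_mul_pow_of_abs_le {α : Type*} [MeasurableSpace α] {μ : Measure α} {m φ : α → ℝ}
    (hm : Integrable m μ) (hφ : Measurable φ) (hB : ∀ x, |φ x| ≤ B) (n : ℕ) :
    Integrable (fun x => m x * φ x ^ n) μ :=
  integrable_mul_of_abs_le (B := B ^ n) hm (hφ.pow_const n) fun x => by
    rw [abs_pow]
    exact pow_le_pow_left₀ (abs_nonneg _) (hB x) n

lemma norm_mul_le_norm_mul {a b : ℝ} (hb : |b| ≤ B) : ‖a * b‖ ≤ ‖a‖ * B := by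
  rw [norm_mul, Real.norm_eq_abs b]
  gcongr

lemma BoundedLip.abs_deriv_le (h : BoundedLip B φ) (x : ℝ) : |deriv φ x| ≤ B :=
  norm_deriv_le_of_lip' (f := φ) (x₀ := x) h.nonneg
    (Eventually.of_forall fun y => h.abs_sub_le y x)

/-- The correlation `z ↦ ∫ m(x) φ(x + z) dx`. It turns testing `φ` against `m` into evaluation
at `0`. -/
noncomputable def correlation (m φ : ℝ → ℝ) (z : ℝ) : ℝ := ∫ x, m x * φ (x + z)

lemma abs_correlation_le (hm : Integrable m) (hB : ∀ x, |φ x| ≤ B) (z : ℝ) :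
    |correlation m φ z| ≤ ∫ x, ‖m x‖ * B :=
  norm_integral_le_of_norm_le (hm.norm.mul_const B)
    (Eventually.of_forall fun _ => norm_mul_le_norm_mul (hB _))

lemma continuous_correlation (hm : Integrable m) (hφ : Continuous φ) (hB : ∀ x, |φ x| ≤ B) :
    Continuous (correlation m φ) :=
  continuous_of_dominated (bound := fun x => ‖m x‖ * B)
    (fun z => hm.aestronglyMeasurable.mul
      (by fun_prop : Continuous fun x => φ (x + z)).aestronglyMeasurable)
    (fun _ => Eventually.of_forall fun _ => norm_mul_le_norm_mul (hB _)) (hm.norm.mul_const B)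
    (Eventually.of_forall fun _ => by fun_prop)

lemma hasDerivAt_correlation_right (hm : Integrable m) (hφ : Differentiable ℝ φ)
    (hB : BoundedLip B φ) (z : ℝ) :
    HasDerivAt (correlation m φ) (correlation m (deriv φ) z) z := by
  have hmeas := hφ.continuous.measurable
  refine (hasDerivAt_integral_of_dominated_loc_of_deriv_le (bound := fun x => ‖m x‖ * B)
    (F := fun z x => m x * φ (x + z)) (F' := fun z x => m x * deriv φ (x + z)) univ_mem
    (Eventually.of_forall fun z => ?_) ?_ ?_
    (Eventually.of_forall fun x z _ => norm_mul_le_norm_mul (hB.abs_deriv_le _))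
    (hm.norm.mul_const B)
    (Eventually.of_forall fun x z _ =>
      ((hφ (x + z)).hasDerivAt.comp_const_add x z).const_mul (m x))).2
  · exact hm.aestronglyMeasurable.mul (by fun_prop : Measurable _).aestronglyMeasurable
  · exact integrable_mul_of_abs_le hm (by fun_prop) fun x => hB.abs_le _
  · exact hm.aestronglyMeasurable.mul
      ((measurable_deriv φ).comp (measurable_add_const z)).aestronglyMeasurable

lemma correlation_deriv_right (hm : Differentiable ℝ m) (hmi : Integrable m)
    (hmi' : Integrable (deriv m)) (hφ : Differentiable ℝ φ) (hB : BoundedLip B φ) (z : ℝ) :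
    correlation m (deriv φ) z = -correlation (deriv m) φ z := by
  have hmeas : Measurable fun x => φ (x + z) := hφ.continuous.measurable.comp (by fun_prop)
  exact integral_mul_deriv_eq_deriv_mul_of_integrable (fun x _ => (hm x).hasDerivAt)
    (fun x _ => (hφ (x + z)).hasDerivAt.comp_add_const x z)
    (integrable_mul_of_abs_le hmi ((measurable_deriv φ).comp (measurable_add_const z))
      fun x => hB.abs_deriv_le _)
    (integrable_mul_of_abs_le hmi' hmeas fun x => hB.abs_le _)
    (integrable_mul_of_abs_le hmi hmeas fun x => hB.abs_le _)

lemma hasDerivAt_correlation (hm : Differentiable ℝ m) (hmi : Integrable m)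
    (hmi' : Integrable (deriv m)) (hφ : Differentiable ℝ φ) (hB : BoundedLip B φ) (z : ℝ) :
    HasDerivAt (correlation m φ) (-correlation (deriv m) φ z) z :=
  correlation_deriv_right hm hmi hmi' hφ hB z ▸ hasDerivAt_correlation_right hmi hφ hB z

lemma deriv_correlation (hm : Differentiable ℝ m) (hmi : Integrable m)
    (hmi' : Integrable (deriv m)) (hφ : Differentiable ℝ φ) (hB : BoundedLip B φ) :
    deriv (correlation m φ) = -correlation (deriv m) φ :=
  funext fun z => (hasDerivAt_correlation hm hmi hmi' hφ hB z).deriv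

lemma deriv_deriv_correlation (hm : ContDiff ℝ 2 m) (hmi : Integrable m)
    (hmi' : Integrable (deriv m)) (hmi'' : Integrable (deriv (deriv m)))
    (hφ : Differentiable ℝ φ) (hB : BoundedLip B φ) :
    deriv (deriv (correlation m φ)) = correlation (deriv (deriv m)) φ := by
  rw [deriv_correlation (hm.differentiable two_ne_zero) hmi hmi' hφ hB, deriv.neg',
    deriv_correlation hm.differentiable_deriv_two hmi' hmi'' hφ hB]
  exact funext fun _ => neg_neg _

lemma contDiff_two_correlation (hm : ContDiff ℝ 2 m) (hmi : Integrable m)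
    (hmi' : Integrable (deriv m)) (hmi'' : Integrable (deriv (deriv m)))
    (hφ : Differentiable ℝ φ) (hB : BoundedLip B φ) : ContDiff ℝ 2 (correlation m φ) := by
  rw [show (2 : WithTop ℕ∞) = 1 + 1 from one_add_one_eq_two.symm, contDiff_succ_iff_deriv]
  refine ⟨fun z => (hasDerivAt_correlation (hm.differentiable two_ne_zero) hmi hmi' hφ hB
    z).differentiableAt, by simp, contDiff_one_iff_deriv.2 ⟨?_, ?_⟩⟩
  · rw [deriv_correlation (hm.differentiable two_ne_zero) hmi hmi' hφ hB]
    exact fun z => (hasDerivAt_correlation hm.differentiable_deriv_two hmi' hmi'' hφ hB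
      z).neg.differentiableAt
  · rw [deriv_deriv_correlation hm hmi hmi' hmi'' hφ hB]
    exact continuous_correlation hmi'' hφ.continuous hB.abs_le

lemma measurable_heatSemigroup (hφ : Continuous φ) (hB : ∀ x, |φ x| ≤ B) (h : ℝ) :
    Measurable (heatSemigroup h φ) :=
  ((continuous_heatSemigroup hφ hB).comp (Continuous.prodMk_right h)).measurable

lemma integral_mul_heatSemigroup (hm : Integrable m) (hφ : Continuous φ) (hB : ∀ x, |φ x| ≤ B)
    (h : ℝ) : ∫ x, m x * heatSemigroup h φ x = heatSemigroup h (correlation m φ) 0 := by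
  simp only [heatSemigroup, correlation, ← integral_const_mul, zero_add]
  refine integral_integral_swap (f := fun x y => m x * φ (x + √(2 * h) * y)) ?_
  exact integrable_mul_of_abs_le (hm.comp_fst _)
    (by fun_prop : Continuous fun p : ℝ × ℝ => φ (p.1 + √(2 * h) * p.2)).measurable fun p => hB _

lemma integral_mul_sub_div {α : Type*} [MeasurableSpace α] {μ : Measure α} {m φ ψ : α → ℝ}
    (hφ : Integrable (fun x => m x * φ x) μ) (hψ : Integrable (fun x => m x * ψ x) μ) (h : ℝ) :
    ∫ x, m x * ((φ x - ψ x) / h) ∂μ = (∫ x, m x * φ x ∂μ - ∫ x, m x * ψ x ∂μ) / h := by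
  simp only [← integral_sub hφ hψ, ← integral_div, mul_sub, mul_div_assoc']

theorem tendsto_integral_mul_heatSemigroup_sub_div (hm : ContDiff ℝ 2 m) (hmi : Integrable m)
    (hmi' : Integrable (deriv m)) (hmi'' : Integrable (deriv (deriv m)))
    (hφ : Differentiable ℝ φ) (hB : BoundedLip B φ) :
    Tendsto (fun h => ∫ x, m x * ((heatSemigroup h φ x - φ x) / h)) (𝓝[>] 0)
      (𝓝 (∫ x, deriv (deriv m) x * φ x)) := by
  have hφc := hφ.continuous
  have hlim := tendsto_heatSemigroup_sub_div (contDiff_two_correlation hm hmi hmi' hmi'' hφ hB)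
    (abs_correlation_le hmi hB.abs_le) 0
  rw [deriv_deriv_correlation hm hmi hmi' hmi'' hφ hB] at hlim
  simp only [correlation, add_zero] at hlim
  refine hlim.congr fun h => ?_
  rw [integral_mul_sub_div
    (integrable_mul_of_abs_le hmi (measurable_heatSemigroup hφc hB.abs_le h)
      (abs_heatSemigroup_le hB.abs_le h))
    (integrable_mul_of_abs_le hmi hφc.measurable hB.abs_le),
    integral_mul_heatSemigroup hmi hφc hB.abs_le]

end Correlation

/-! ### Differentiating the pairing -/

/-- `v` is a solution on `[0, t]` of `∂ₛv = -∂ₓ²v + 2 f v`, with `v` and `∂ₛv` dominated by the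
integrable function `g` uniformly in time. -/
structure IsDualSolution (f : ℝ → ℝ) (t : ℝ) (g : ℝ → ℝ) (v : ℝ → ℝ → ℝ) : Prop where
  hasDerivAt_time : ∀ s ∈ Icc (0 : ℝ) t, ∀ x, HasDerivAt (fun r => v r x)
    (-deriv (deriv (v s)) x + 2 * f x * v s x) s
  contDiff : ∀ s ∈ Icc (0 : ℝ) t, ContDiff ℝ 2 (v s)
  integrable_deriv : ∀ s ∈ Icc (0 : ℝ) t, Integrable (deriv (v s))
  integrable_bound : Integrable g
  abs_le : ∀ s ∈ Icc (0 : ℝ) t, ∀ x, |v s x| ≤ g x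
  abs_deriv_le : ∀ s ∈ Icc (0 : ℝ) t, ∀ x, |-deriv (deriv (v s)) x + 2 * f x * v s x| ≤ g x

section Pairing

variable {f g : ℝ → ℝ} {t T F B s r : ℝ} {w v : ℝ → ℝ → ℝ}

namespace IsDualSolution

lemma continuous (hv : IsDualSolution f t g v) (hs : s ∈ Icc 0 t) : Continuous (v s) :=
  (hv.contDiff s hs).continuous

lemma integrable (hv : IsDualSolution f t g v) (hs : s ∈ Icc 0 t) : Integrable (v s) :=
  hv.integrable_bound.mono' (hv.continuous hs).aestronglyMeasurable
    (Eventually.of_forall (hv.abs_le s hs))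

lemma integrable_time_deriv (hv : IsDualSolution f t g v) (hf : Continuous f)
    (hs : s ∈ Icc 0 t) : Integrable fun x => -deriv (deriv (v s)) x + 2 * f x * v s x := by
  have hv₂ : Continuous (deriv (deriv (v s))) := ((hv.contDiff s hs).iterate_deriv' 0 2).continuous
  have hv₀ := hv.continuous hs
  exact hv.integrable_bound.mono' (by fun_prop : Continuous _).aestronglyMeasurable
    (Eventually.of_forall (hv.abs_deriv_le s hs))

lemma integrable_deriv_deriv (hv : IsDualSolution f t g v) (hf : Continuous f)
    (hfF : ∀ x, |f x| ≤ F) (hs : s ∈ Icc 0 t) : Integrable (deriv (deriv (v s))) := by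
  have hfv : Integrable fun x => v s x * f x :=
    integrable_mul_of_abs_le (hv.integrable hs) hf.measurable hfF
  refine ((hfv.const_mul 2).sub (hv.integrable_time_deriv hf hs)).congr
    (Eventually.of_forall fun x => ?_)
  simp only [Pi.sub_apply]
  ring

lemma abs_sub_le (hv : IsDualSolution f t g v) (hs : s ∈ Icc 0 t) (hr : r ∈ Icc 0 t) (x : ℝ) :
    |v r x - v s x| ≤ g x * |r - s| :=
  (convex_Icc 0 t).norm_image_sub_le_of_norm_hasDerivWithin_le
    (fun s hs => (hv.hasDerivAt_time s hs x).hasDerivWithinAt)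
    (fun s hs => hv.abs_deriv_le s hs x) hs hr

end IsDualSolution

lemma eventually_add_mem_Icc (hs : s ∈ Ico 0 t) : ∀ᶠ h in 𝓝[>] 0, 0 < h ∧ s + h ∈ Icc 0 t := by
  filter_upwards [Ioo_mem_nhdsGT (sub_pos.2 hs.2)] with h hh
  exact ⟨hh.1, add_nonneg hs.1 hh.1.le, by linarith [hh.2]⟩

lemma tendsto_const_add_nhdsGT_zero (s : ℝ) : Tendsto (fun h => s + h) (𝓝[>] 0) (𝓝 s) := by
  simpa using ((continuous_const_add s).tendsto 0).mono_left nhdsWithin_le_nhds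

lemma hasDerivWithinAt_Ici_of_tendsto_div {J : ℝ → ℝ} {c : ℝ}
    (hJ : Tendsto (fun h => (J (s + h) - J s) / h) (𝓝[>] 0) (𝓝 c)) :
    HasDerivWithinAt J c (Ici s) s := by
  rw [← hasDerivWithinAt_Ioi_iff_Ici, hasDerivWithinAt_iff_tendsto_slope' (by simp)]
  have hshift : Tendsto (fun r => r - s) (𝓝[>] s) (𝓝[>] 0) := by
    refine tendsto_nhdsWithin_iff.2 ⟨?_, eventually_mem_nhdsWithin.mono fun r (hr : s < r) =>
      mem_Ioi.2 (sub_pos.2 hr)⟩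
    simpa using ((continuous_sub_right s).tendsto s).mono_left nhdsWithin_le_nhds
  refine (hJ.comp hshift).congr fun r => ?_
  rw [Function.comp_apply, add_sub_cancel, slope_def_field]

lemma IsDualSolution.tendsto_integral_slope_mul (hv : IsDualSolution f t g v)
    (hw : IsNonnegSolution f T w) (htT : t < T) (hB : ∀ s ∈ Icc 0 t, BoundedLip B (w s))
    (hs : s ∈ Ico 0 t) :
    Tendsto (fun h => ∫ x, w (s + h) x * ((v (s + h) x - v s x) / h)) (𝓝[>] 0)
      (𝓝 (∫ x, w s x * (-deriv (deriv (v s)) x + 2 * f x * v s x))) := by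
  have hsI := Ico_subset_Icc_self hs
  refine tendsto_integral_filter_of_dominated_convergence (fun x => B * g x) ?_ ?_
    (hv.integrable_bound.const_mul B) (Eventually.of_forall fun x => ?_)
  · filter_upwards [eventually_add_mem_Icc hs] with h ⟨_, hI⟩
    have hvh := hv.continuous hI
    have hvs := hv.continuous hsI
    have hwh := hw.continuous (Icc_subset_Ico_right htT hI)
    exact (by fun_prop : Continuous _).aestronglyMeasurable
  · filter_upwards [eventually_add_mem_Icc hs] with h ⟨hh, hI⟩
    refine Eventually.of_forall fun x => ?_
    have hquot : |(v (s + h) x - v s x) / h| ≤ g x := by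
      rw [abs_div, div_le_iff₀ (abs_pos.2 hh.ne')]
      simpa using hv.abs_sub_le hsI hI x
    rw [Real.norm_eq_abs, abs_mul]
    exact mul_le_mul ((hB _ hI).abs_le x) hquot (abs_nonneg _) (hB _ hI).nonneg
  · have hslope := (hv.hasDerivAt_time s hsI x).tendsto_slope_zero_right
    have hwlim := (hw.continuousAt_time (Icc_subset_Ico_right htT hsI) x).tendsto.comp
      (tendsto_const_add_nhdsGT_zero s)
    refine (hwlim.mul hslope).congr fun h => ?_
    simp only [smul_eq_mul, Function.comp_apply]
    ring

lemma IsNonnegSolution.tendsto_integral_mul_sub_heatSemigroup_div (hw : IsNonnegSolution f T w)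
    (hf₀ : ∀ x, 0 ≤ f x) (hF : ∀ x, f x ≤ F) (htT : t < T)
    (hB : ∀ s ∈ Icc 0 t, BoundedLip B (w s)) (hs : s ∈ Ico 0 t) {m : ℝ → ℝ}
    (hm : Integrable m) :
    Tendsto (fun h => ∫ x, m x * ((w (s + h) x - heatSemigroup h (w s) x) / h)) (𝓝[>] 0)
      (𝓝 (∫ x, m x * (w s x ^ 2 - 2 * f x * w s x))) := by
  have hsI := Ico_subset_Icc_self hs
  have hsT := Icc_subset_Ico_right htT hsI
  have hws := hw.continuous hsT
  have hBs := (hB s hsI).abs_le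
  refine tendsto_integral_filter_of_dominated_convergence
    (fun x => ‖m x‖ * (2 * F * B + B ^ 2)) ?_ ?_ (hm.norm.mul_const _)
    (Eventually.of_forall fun x => ?_)
  · filter_upwards [eventually_add_mem_Icc hs] with h ⟨_, hI⟩
    have hwh := (hw.continuous (Icc_subset_Ico_right htT hI)).measurable
    have hS := measurable_heatSemigroup hws hBs h
    exact hm.aestronglyMeasurable.mul (by fun_prop : Measurable _).aestronglyMeasurable
  · filter_upwards [eventually_add_mem_Icc hs] with h ⟨hh, hI⟩
    refine Eventually.of_forall fun x => norm_mul_le_norm_mul ?_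
    have hIcc : Icc s (s + h) ⊆ Icc 0 t := Icc_subset_Icc hs.1 hI.2
    have hlin := hw.abs_sub_heatSemigroup_le hf₀ hF (hIcc.trans (Icc_subset_Ico_right htT))
      (by linarith) (fun r hr => hB r (hIcc hr)) x
    rw [add_sub_cancel_left] at hlin
    rwa [abs_div, abs_of_pos hh, div_le_iff₀ hh]
  · have htime := (hw.hasDerivAt_time s hsT x).tendsto_slope_zero_right
    have hheat := tendsto_heatSemigroup_sub_div (hw.contDiff s hsT) hBs x
    convert (htime.sub hheat).const_mul (m x) using 2
    · simp only [smul_eq_mul]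
      ring
    · ring

lemma IsDualSolution.integral_time_deriv_add_integral_generator (hv : IsDualSolution f t g v)
    (hf : Continuous f) (hfF : ∀ x, |f x| ≤ F) (hs : s ∈ Icc 0 t) {φ : ℝ → ℝ} (hφ : Continuous φ)
    (hB : ∀ x, |φ x| ≤ B) :
    (∫ x, φ x * (-deriv (deriv (v s)) x + 2 * f x * v s x)) +
        ((∫ x, v s x * (φ x ^ 2 - 2 * f x * φ x)) + ∫ x, deriv (deriv (v s)) x * φ x) =
      ∫ x, v s x * φ x ^ 2 := by
  have hmeas := hφ.measurable
  have hfv : Integrable fun x => v s x * f x :=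
    integrable_mul_of_abs_le (hv.integrable hs) hf.measurable hfF
  have hfφ := (integrable_mul_of_abs_le hfv hmeas hB).const_mul 2
  have hsq := integrable_mul_pow_of_abs_le (hv.integrable hs) hmeas hB 2
  have hdd := integrable_mul_of_abs_le (hv.integrable_deriv_deriv hf hfF hs) hmeas hB
  have htime : ∫ x, φ x * (-deriv (deriv (v s)) x + 2 * f x * v s x) =
      (∫ x, 2 * (v s x * f x * φ x)) - ∫ x, deriv (deriv (v s)) x * φ x := by
    rw [← integral_sub hfφ hdd]
    congr 1 with x
    ring
  have hgen : ∫ x, v s x * (φ x ^ 2 - 2 * f x * φ x) =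
      (∫ x, v s x * φ x ^ 2) - ∫ x, 2 * (v s x * f x * φ x) := by
    rw [← integral_sub hsq hfφ]
    congr 1 with x
    ring
  rw [htime, hgen]
  ring

-- The increment of the pairing splits into the increment of `v`, the deviation of `w` from the
-- heat flow, and the increment of the heat flow; in the limit the terms in `∂ₓ²v` and `f` cancel.
lemma IsDualSolution.hasDerivWithinAt_Ici_integral_mul (hv : IsDualSolution f t g v)
    (hw : IsNonnegSolution f T w) (hf₀ : ∀ x, 0 ≤ f x) (hF : ∀ x, f x ≤ F) (hf : Continuous f)
    (htT : t < T) (hB : ∀ s ∈ Icc 0 t, BoundedLip B (w s)) (hs : s ∈ Ico 0 t) :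
    HasDerivWithinAt (fun r => ∫ x, v r x * w r x) (∫ x, v s x * w s x ^ 2) (Ici s) s := by
  have hsI := Ico_subset_Icc_self hs
  have hsT := Icc_subset_Ico_right htT hsI
  have hws := hw.continuous hsT
  have hBs := hB s hsI
  have hvi := hv.integrable hsI
  have hfF : ∀ x, |f x| ≤ F := fun x => (abs_of_nonneg (hf₀ x)).trans_le (hF x)
  have hlim := (hv.tendsto_integral_slope_mul hw htT hB hs).add
    ((hw.tendsto_integral_mul_sub_heatSemigroup_div hf₀ hF htT hB hs hvi).add
      (tendsto_integral_mul_heatSemigroup_sub_div (hv.contDiff s hsI) hvi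
        (hv.integrable_deriv s hsI) (hv.integrable_deriv_deriv hf hfF hsI)
        ((hw.contDiff s hsT).differentiable two_ne_zero) hBs))
  rw [hv.integral_time_deriv_add_integral_generator hf hfF hsI hws hBs.abs_le] at hlim
  refine hasDerivWithinAt_Ici_of_tendsto_div (hlim.congr' ?_)
  filter_upwards [eventually_add_mem_Icc hs] with h ⟨_, hI⟩
  have hwh := (hw.continuous (Icc_subset_Ico_right htT hI)).measurable
  have hBh := (hB _ hI).abs_le
  have hvw : ∀ r ∈ Icc 0 t, Integrable fun x => v r x * w (s + h) x := fun r hr =>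
    integrable_mul_of_abs_le (hv.integrable hr) hwh hBh
  have hvS : Integrable fun x => v s x * heatSemigroup h (w s) x :=
    integrable_mul_of_abs_le hvi (measurable_heatSemigroup hws hBs.abs_le h)
      (abs_heatSemigroup_le hBs.abs_le h)
  rw [integral_mul_sub_div (hvw s hsI) hvS, integral_mul_sub_div hvS
    (integrable_mul_of_abs_le hvi hws.measurable hBs.abs_le),
    integral_mul_sub_div (by simpa only [mul_comm] using hvw _ hI)
      (by simpa only [mul_comm] using hvw s hsI)]
  simp only [mul_comm (w (s + h) _)]
  ring

lemma IsDualSolution.continuousOn_integral_mul_pow (hv : IsDualSolution f t g v)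
    (hw : IsNonnegSolution f T w) (htT : t < T) (hB : ∀ s ∈ Icc 0 t, BoundedLip B (w s)) (n : ℕ) :
    ContinuousOn (fun s => ∫ x, v s x * w s x ^ n) (Icc 0 t) := by
  refine continuousOn_of_dominated (bound := fun x => g x * B ^ n) (fun s hs => ?_)
    (fun s hs => Eventually.of_forall fun x => ?_) (hv.integrable_bound.mul_const _)
    (Eventually.of_forall fun x s hs => ?_)
  · have hvs := hv.continuous hs
    have hws := hw.continuous (Icc_subset_Ico_right htT hs)
    exact (by fun_prop : Continuous _).aestronglyMeasurable
  · rw [norm_mul, norm_pow]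
    exact mul_le_mul (hv.abs_le s hs x)
      (pow_le_pow_left₀ (abs_nonneg _) ((hB s hs).abs_le x) n) (by positivity)
      ((abs_nonneg _).trans (hv.abs_le s hs x))
  · exact ((hv.hasDerivAt_time s hs x).continuousAt.mul
      ((hw.continuousAt_time (Icc_subset_Ico_right htT hs) x).pow n)).continuousWithinAt

lemma hasDerivWithinAt_Icc_of_Ici {E : Type*} [NormedAddCommGroup E] [NormedSpace ℝ E]
    [CompleteSpace E] {J k : ℝ → E} {a b : ℝ} (hJ : ContinuousOn J (Icc a b))
    (hk : ContinuousOn k (Icc a b)) (hd : ∀ r ∈ Ico a b, HasDerivWithinAt J (k r) (Ici r) r)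
    (hs : s ∈ Icc a b) : HasDerivWithinAt J (k s) (Icc a b) s := by
  have hab : a ≤ b := hs.1.trans hs.2
  have hext : ∀ r ∈ Icc a b, IccExtend hab (domRestrict (Icc a b) k) r = k r := fun r hr =>
    IccExtend_of_mem hab _ hr
  set G : ℝ → E := fun r => ∫ y in a..r, IccExtend hab (domRestrict (Icc a b) k) y
  have hG : ∀ r, HasDerivAt G (IccExtend hab (domRestrict (Icc a b) k) r) r := fun r =>
    ((continuousOn_iff_continuous_domRestrict.1 hk).Icc_extend'.integral_hasStrictDerivAt a
      r).hasDerivAt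
  have hconst : ∀ r ∈ Icc a b, J r - G r = J a - G a := by
    refine constant_of_has_deriv_right_zero
      (hJ.sub fun r _ => (hG r).continuousAt.continuousWithinAt) fun r hr => ?_
    refine ((hd r hr).sub (hG r).hasDerivWithinAt).congr_deriv ?_
    rw [hext r (Ico_subset_Icc_self hr), sub_self]
  refine HasDerivWithinAt.congr (f := fun r => G r + (J a - G a)) ?_ (fun r hr => ?_) ?_
  · rw [← hext s hs]
    exact ((hG s).add_const _).hasDerivWithinAt
  · rw [← hconst r hr, add_sub_cancel]
  · rw [← hconst s hs, add_sub_cancel]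

theorem IsDualSolution.hasDerivWithinAt_integral_mul (hv : IsDualSolution f t g v)
    (hw : IsNonnegSolution f T w) (hf₀ : ∀ x, 0 ≤ f x) (hF : ∀ x, f x ≤ F) (hf : Continuous f)
    (htT : t < T) (hB : ∀ s ∈ Icc 0 t, BoundedLip B (w s)) (hs : s ∈ Icc 0 t) :
    HasDerivWithinAt (fun r => ∫ x, v r x * w r x) (∫ x, v s x * w s x ^ 2) (Icc 0 t) s :=
  hasDerivWithinAt_Icc_of_Ici (k := fun s => ∫ x, v s x * w s x ^ 2)
    (by simpa only [pow_one] using hv.continuousOn_integral_mul_pow hw htT hB 1)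
    (hv.continuousOn_integral_mul_pow hw htT hB 2)
    (fun _ hr => hv.hasDerivWithinAt_Ici_integral_mul hw hf₀ hF hf htT hB hr) hs

lemma sq_integral_mul_le {α : Type*} [MeasurableSpace α] {μ : Measure α} {m φ : α → ℝ}
    (hm₀ : ∀ x, 0 ≤ m x) (hm : Integrable m μ) (hφ : Integrable (fun x => m x * φ x) μ)
    (hφ₂ : Integrable (fun x => m x * φ x ^ 2) μ) :
    (∫ x, m x * φ x ∂μ) ^ 2 ≤ (∫ x, m x ∂μ) * ∫ x, m x * φ x ^ 2 ∂μ := by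
  have hquad : ∀ c : ℝ, 0 ≤ (∫ x, m x ∂μ) * (c * c) + -2 * (∫ x, m x * φ x ∂μ) * c +
      ∫ x, m x * φ x ^ 2 ∂μ := fun c =>
    calc 0 ≤ ∫ x, m x * (φ x - c) ^ 2 ∂μ :=
          integral_nonneg fun x => mul_nonneg (hm₀ x) (sq_nonneg _)
      _ = ∫ x, m x * (c * c) + (-2 * c) * (m x * φ x) + m x * φ x ^ 2 ∂μ := by
          congr 1 with x
          ring
      _ = _ := by
          have hlin : Integrable (fun x => m x * (c * c) + -2 * c * (m x * φ x)) μ :=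
            (hm.mul_const _).add (hφ.const_mul _)
          rw [integral_add hlin hφ₂,
            integral_add (hm.mul_const _) (hφ.const_mul _), integral_mul_const,
            integral_const_mul]
          ring
  have hdiscrim := discrim_le_zero hquad
  rw [discrim] at hdiscrim
  linarith

end Pairing

section Fence

variable {f g : ℝ → ℝ} {t T M : ℝ} {u v : ℝ → ℝ → ℝ}

lemma lipschitzWith_of_abs_deriv_le {φ : ℝ → ℝ} (hφ : Differentiable ℝ φ)
    (hM : ∀ x, |deriv φ x| ≤ M) : LipschitzWith M.toNNReal φ :=
  lipschitzWith_of_nnnorm_deriv_le hφ fun x => by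
    rw [← norm_toNNReal]
    exact Real.toNNReal_le_toNNReal (hM x)

lemma boundedLip_of_abs_deriv_le {φ : ℝ → ℝ} (hφ : Differentiable ℝ φ) (hB : ∀ x, |φ x| ≤ M)
    (hM : ∀ x, |deriv φ x| ≤ M) : BoundedLip M φ := by
  refine ⟨hB, fun x y => ?_⟩
  have hdist := (lipschitzWith_of_abs_deriv_le hφ hM).dist_le_mul x y
  rwa [Real.coe_toNNReal M ((abs_nonneg _).trans (hB 0))] at hdist

lemma IsNonnegSolution.of_neg
    (hu_eq : ∀ s ∈ Ico (0 : ℝ) T, ∀ x, HasDerivAt (fun r => u r x)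
      (deriv (deriv (u s)) x - 2 * f x * u s x - u s x ^ 2) s)
    (hu_reg : ∀ s ∈ Ico (0 : ℝ) T, ContDiff ℝ 2 (u s))
    (hu_nonpos : ∀ s ∈ Ico (0 : ℝ) T, ∀ x, u s x ≤ 0)
    (hu_bdd : ∀ s ∈ Ico (0 : ℝ) T, ∃ M : ℝ, ∀ x, |u s x| ≤ M ∧ |deriv (u s) x| ≤ M) :
    IsNonnegSolution f T (-u) where
  hasDerivAt_time s hs x := (hu_eq s hs x).neg.congr_deriv <| by
    simp only [Pi.neg_apply, deriv.neg', deriv.fun_neg]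
    ring
  contDiff s hs := (hu_reg s hs).neg
  nonneg s hs x := neg_nonneg.2 (hu_nonpos s hs x)
  boundedLip s hs := by
    obtain ⟨M, hM⟩ := hu_bdd s hs
    refine ⟨M, boundedLip_of_abs_deriv_le ((hu_reg s hs).neg.differentiable two_ne_zero)
      (fun x => ?_) fun x => ?_⟩
    · simpa using (hM x).1
    · simpa [deriv.neg'] using (hM x).2

lemma IsDualSolution.of_abs_deriv_le
    (hv_eq : ∀ s ∈ Icc (0 : ℝ) t, ∀ x, HasDerivAt (fun r => v r x)
      (-(deriv (deriv (v s)) x) + 2 * f x * v s x) s)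
    (hv_reg : ∀ s ∈ Icc (0 : ℝ) t, ContDiff ℝ 2 (v s))
    (hv_int : ∀ s ∈ Icc (0 : ℝ) t, Integrable (deriv (v s))) (hg : Integrable g)
    (hgv : ∀ s ∈ Icc (0 : ℝ) t, ∀ x, |v s x| ≤ g x ∧ |deriv (fun r => v r x) s| ≤ g x) :
    IsDualSolution f t g v where
  hasDerivAt_time := hv_eq
  contDiff := hv_reg
  integrable_deriv := hv_int
  integrable_bound := hg
  abs_le s hs x := (hgv s hs x).1
  abs_deriv_le s hs x := (hv_eq s hs x).deriv ▸ (hgv s hs x).2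

end Fence

end HeatPairing

theorem fence_for_pairing_general
    {f : ℝ → ℝ} {L : ℝ≥0} (hf_nonneg : ∀ x, 0 ≤ f x) (hf_bdd : BddAbove (Set.range f))
    (hf_lip : LipschitzWith L f) {t T : ℝ} (htT : t < T) {u : ℝ → ℝ → ℝ}
    (hu_eq : ∀ s ∈ Set.Ico (0 : ℝ) T, ∀ x : ℝ,
      HasDerivAt (fun τ => u τ x) (deriv (deriv (u s)) x - 2 * f x * u s x - (u s x) ^ 2) s)
    (hu_reg : ∀ s ∈ Set.Ico (0 : ℝ) T, ContDiff ℝ 2 (u s))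
    (hu_nonpos : ∀ s ∈ Set.Ico (0 : ℝ) T, ∀ x, u s x ≤ 0)
    (hu_bdd : ∀ s ∈ Set.Ico (0 : ℝ) T, ∃ M : ℝ, ∀ x, |u s x| ≤ M ∧ |deriv (u s) x| ≤ M)
    {v : ℝ → ℝ → ℝ} (hv_nonneg : ∀ s ∈ Set.Icc (0 : ℝ) t, ∀ x, 0 ≤ v s x)
    (hv_eq : ∀ s ∈ Set.Icc (0 : ℝ) t, ∀ x : ℝ,
      HasDerivAt (fun τ => v τ x) (-(deriv (deriv (v s)) x) + 2 * f x * v s x) s)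
    (hv_reg : ∀ s ∈ Set.Icc (0 : ℝ) t, ContDiff ℝ 2 (v s))
    (hv_int : ∀ s ∈ Set.Icc (0 : ℝ) t, Integrable (deriv (v s)))
    (hv_unif : ∃ g : ℝ → ℝ, Integrable g ∧ ∀ s ∈ Set.Icc (0 : ℝ) t, ∀ x,
      |v s x| ≤ g x ∧ |deriv (fun τ => v τ x) s| ≤ g x)
    (hv_pos : ∀ s ∈ Set.Icc (0 : ℝ) t, 0 < ∫ x, v s x) :
    ∃ J' : ℝ → ℝ, ∀ s ∈ Set.Icc (0 : ℝ) t,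
      HasDerivWithinAt (fun σ => ∫ x, v σ x * u σ x) (J' s) (Set.Icc (0 : ℝ) t) s ∧
        J' s ≤ -(∫ x, v s x * u s x) ^ 2 / (∫ x, |v s x|) := by
  obtain ⟨g, hg, hgv⟩ := hv_unif
  obtain ⟨F, hF⟩ := hf_bdd
  have hF' : ∀ x, f x ≤ F := fun x => hF ⟨x, rfl⟩
  have hw := HeatPairing.IsNonnegSolution.of_neg hu_eq hu_reg hu_nonpos hu_bdd
  have hv := HeatPairing.IsDualSolution.of_abs_deriv_le hv_eq hv_reg hv_int hg hgv
  obtain ⟨B, hB⟩ := hw.exists_boundedLip hf_nonneg hF' hf_lip.dist_le_mul htT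
  refine ⟨fun s => -∫ x, v s x * u s x ^ 2, fun s hs => ⟨?_, ?_⟩⟩
  · simpa [Pi.neg_def, integral_neg] using
      (hv.hasDerivWithinAt_integral_mul hw hf_nonneg hF' hf_lip.continuous htT hB hs).neg
  · have hsT := Set.Icc_subset_Ico_right htT hs
    obtain ⟨M, hM⟩ := hu_bdd s hsT
    have hint := HeatPairing.integrable_mul_pow_of_abs_le (hv.integrable hs)
      (hu_reg s hsT).continuous.measurable fun x => (hM x).1
    have hCS := HeatPairing.sq_integral_mul_le (hv_nonneg s hs) (hv.integrable hs)
      (by simpa only [pow_one] using hint 1) (hint 2)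
    simp only [abs_of_nonneg (hv_nonneg s hs _)]
    rw [neg_div, neg_le_neg_iff, div_le_iff₀' (hv_pos s hs)]
    exact hCS

/-- Lemma (fence for the pairing): if `u ≤ 0` is a bounded classical solution of
`∂u/∂s = ∂²u/∂x² − 2 f u − u²` on `[0,T) × ℝ` and `v ≥ 0` solves the backward equation
`∂v/∂s = −∂²v/∂x² + 2 f v` on `[0,t] × ℝ` with the stated regularity, integrability,
decay, positivity, and locally-uniform domination, then `J(s) = ∫ v(s,x) u(s,x) dx` is
differentiable on `[0,t]` with `J'(s) ≤ −J(s)² / ‖v(s,·)‖_{L¹}`. -/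
theorem fence_for_pairing
    (f : ℝ → ℝ) (hf_smooth : ContDiff ℝ (⊤ : ℕ∞) f) (hf_pos : ∀ x, 0 < f x)
    (hf_decay : Tendsto f (cocompact ℝ) (nhds 0))
    (hf_d1 : ∃ M : ℝ, ∀ x, |deriv f x| ≤ M)
    (hf_d2 : ∃ M : ℝ, ∀ x, |deriv (deriv f) x| ≤ M)
    (t T : ℝ) (ht : 0 < t) (htT : t < T)
    (u : ℝ → ℝ → ℝ)
    (hu_eq : ∀ s ∈ Set.Ico (0 : ℝ) T, ∀ x : ℝ,
      HasDerivAt (fun τ => u τ x)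
        (deriv (deriv (u s)) x - 2 * f x * u s x - (u s x) ^ 2) s)
    (hu_reg : ∀ s ∈ Set.Ico (0 : ℝ) T, ContDiff ℝ 2 (u s))
    (hu_nonpos : ∀ s ∈ Set.Ico (0 : ℝ) T, ∀ x, u s x ≤ 0)
    (hu_bdd : ∀ s ∈ Set.Ico (0 : ℝ) T, ∃ M : ℝ, ∀ x,
      |u s x| ≤ M ∧ |deriv (u s) x| ≤ M)
    (v : ℝ → ℝ → ℝ)
    (hv_nonneg : ∀ s ∈ Set.Icc (0 : ℝ) t, ∀ x, 0 ≤ v s x)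
    (hv_eq : ∀ s ∈ Set.Icc (0 : ℝ) t, ∀ x : ℝ,
      HasDerivAt (fun τ => v τ x)
        (-(deriv (deriv (v s)) x) + 2 * f x * v s x) s)
    (hv_reg : ∀ s ∈ Set.Icc (0 : ℝ) t, ContDiff ℝ 2 (v s))
    (hv_t_cont : ∀ s ∈ Set.Icc (0 : ℝ) t,
      Continuous (fun x => deriv (fun τ => v τ x) s))
    (hv_int : ∀ s ∈ Set.Icc (0 : ℝ) t,
      Integrable (v s) ∧ Integrable (deriv (v s)) ∧
        Integrable (deriv (deriv (v s))) ∧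
        Integrable (fun x => deriv (fun τ => v τ x) s))
    (hv_decay : ∀ s ∈ Set.Icc (0 : ℝ) t,
      Tendsto (v s) (cocompact ℝ) (nhds 0) ∧
        Tendsto (deriv (v s)) (cocompact ℝ) (nhds 0) ∧
        Tendsto (deriv (deriv (v s))) (cocompact ℝ) (nhds 0) ∧
        Tendsto (fun x => deriv (fun τ => v τ x) s) (cocompact ℝ) (nhds 0))
    (hv_unif : ∃ g : ℝ → ℝ, Integrable g ∧ ∀ s ∈ Set.Icc (0 : ℝ) t, ∀ x,
      |v s x| ≤ g x ∧ |deriv (fun τ => v τ x) s| ≤ g x)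
    (hv_pos : ∀ s ∈ Set.Icc (0 : ℝ) t, 0 < ∫ x, v s x) :
    ∃ J' : ℝ → ℝ, ∀ s ∈ Set.Icc (0 : ℝ) t,
      HasDerivWithinAt (fun σ => ∫ x, v σ x * u σ x) (J' s) (Set.Icc (0 : ℝ) t) s ∧
        J' s ≤ -(∫ x, v s x * u s x) ^ 2 / (∫ x, |v s x|) := by
  obtain ⟨M, hM⟩ := hf_d1
  exact fence_for_pairing_general (fun x => (hf_pos x).le)
    (ZeroAtInftyContinuousMap.isBounded_range ⟨⟨f, hf_smooth.continuous⟩, hf_decay⟩).bddAbove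
    (HeatPairing.lipschitzWith_of_abs_deriv_le (hf_smooth.differentiable (by simp)) hM)
    htT hu_eq hu_reg hu_nonpos hu_bdd hv_nonneg hv_eq hv_reg (fun s hs => (hv_int s hs).2.1)
    hv_unif hv_pos
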